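/- arXiv:2301.02155 — 2 statements merged into one kernel-verified Lean document; each statement's English description precedes it below -/
import Mathlib

section
/- If an (L, α1, α2, β1, β2) zero-error (2,2) PIR code exists, then a (2L, α1+α2, α1+α2, β1+β2, β1+β2) zero-error (2,2) PIR code exists. -/
open scoped BigOperators

namespace PIR

/-- Messages are length-`L` vectors over `F_2`. -/
abbrev Msg (L : ℕ) := Fin L → ZMod 2

/-- A (2,2) PIR code (without the correctness condition) with message length `L`
and query alphabet `Q`.  The two messages are independent and uniform on `F_2^L`;
the queries are independent of the messages (built into the model: the query
distribution `P k` for desired message `k` does not depend on the messages). -/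
structure CodeBase (L : ℕ) (Q : Type) [Fintype Q] [DecidableEq Q] where
  /-- query distribution for desired message index `k` -/
  P : Fin 2 → Q × Q → ℝ
  P_nonneg : ∀ k qq, 0 ≤ P k qq
  P_sum : ∀ k, ∑ qq : Q × Q, P k qq = 1
  /-- number of stored `F_2` symbols at database `n` -/
  stor : Fin 2 → ℕ
  /-- storage encoders -/
  phi : (n : Fin 2) → Msg L × Msg L → (Fin (stor n) → ZMod 2)
  /-- answer lengths -/
  blen : Fin 2 → Q → ℕ
  /-- deterministic answer functions -/
  ans : (n : Fin 2) → (q : Q) → (Fin (stor n) → ZMod 2) → (Fin (blen n q) → ZMod 2)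
  /-- decoding functions -/
  dec : (k : Fin 2) → (q₁ q₂ : Q) → (Fin (blen 0 q₁) → ZMod 2) →
      (Fin (blen 1 q₂) → ZMod 2) → Msg L
  /-- Privacy: for each database `n`, the joint distribution of
  `(Q_n^{[k]}, A_n^{[k]}, S_n)` is the same for `k = 1, 2`.  Since the answer
  `A_n` is the fixed deterministic function `ans` of `(Q_n, S_n)` (not
  depending on `k`), this is expressed as equality of the joint distributions of
  `(Q_n, S_n)` (messages uniform, queries independent of messages). -/
  privacy : ∀ (n : Fin 2) (q : Q) (s : Fin (stor n) → ZMod 2),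
    (∑ qq : Q × Q, if (if n = 0 then qq.1 else qq.2) = q then P 0 qq else 0) *
      ((Finset.univ.filter (fun w : Msg L × Msg L => phi n w = s)).card : ℝ) =
    (∑ qq : Q × Q, if (if n = 0 then qq.1 else qq.2) = q then P 1 qq else 0) *
      ((Finset.univ.filter (fun w : Msg L × Msg L => phi n w = s)).card : ℝ)

variable {L : ℕ} {Q : Type} [Fintype Q] [DecidableEq Q]

/-- The desired message `W_k`. -/
def target (k : Fin 2) (w : Msg L × Msg L) : Msg L := if k = 0 then w.1 else w.2

/-- The decoder output `Ŵ_k` when the realized queries are `qq` and the messages `w`. -/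
def retrieved (C : CodeBase L Q) (k : Fin 2) (qq : Q × Q) (w : Msg L × Msg L) : Msg L :=
  C.dec k qq.1 qq.2 (C.ans 0 qq.1 (C.phi 0 w)) (C.ans 1 qq.2 (C.phi 1 w))

/-- Zero-error correctness: `Ŵ_k = W_k` for all realizations. -/
def IsZeroError (C : CodeBase L Q) : Prop :=
  ∀ (k : Fin 2) (w : Msg L × Msg L) (qq : Q × Q), C.P k qq ≠ 0 →
    retrieved C k qq w = target k w

/-- The average probability of error `P_e`. -/
noncomputable def Pe (C : CodeBase L Q) : ℝ :=
  (1/2) * ∑ k : Fin 2, ∑ w : Msg L × Msg L, ∑ qq : Q × Q,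
    ((2:ℝ)^(2*L))⁻¹ * C.P k qq * (if retrieved C k qq w ≠ target k w then 1 else 0)

/-- The retrieval rate `β_n = E[β_n^{(Q_n)}]` (the marginal of `Q_n` is the same
for `k=1,2` by privacy; we use `k=1`, i.e. index `0`). -/
noncomputable def betaRate (C : CodeBase L Q) (n : Fin 2) : ℝ :=
  ∑ qq : Q × Q, C.P 0 qq * (C.blen n (if n = 0 then qq.1 else qq.2) : ℝ)

/-- A linear PIR code: storage encoders and answer functions are `F_2`-linear. -/
def IsLinear (C : CodeBase L Q) : Prop :=
  (∀ n : Fin 2, IsLinearMap (ZMod 2) (C.phi n)) ∧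
  (∀ (n : Fin 2) (q : Q), IsLinearMap (ZMod 2) (C.ans n q))

/-- A bundled PIR code (with its query alphabet). -/
structure Code (L : ℕ) where
  Q : Type
  [fQ : Fintype Q]
  [dQ : DecidableEq Q]
  base : CodeBase L Q

attribute [instance] Code.fQ Code.dQ

/-- A normalized storage-retrieval pair `(ᾱ, β̄)` is achievable. -/
def Achievable (ab : ℝ × ℝ) : Prop :=
  ∀ ε > (0:ℝ), ∃ L₀ : ℕ, ∀ L ≥ L₀, ∃ C : Code L,
    IsZeroError C.base ∧
    ((C.base.stor 0 + C.base.stor 1 : ℕ) : ℝ) / 2 ≤ L * (ab.1 + ε) ∧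
    (betaRate C.base 0 + betaRate C.base 1) / 2 ≤ L * (ab.2 + ε)

/-- Achievability by linear codes. -/
def LinAchievable (ab : ℝ × ℝ) : Prop :=
  ∀ ε > (0:ℝ), ∃ L₀ : ℕ, ∀ L ≥ L₀, ∃ C : Code L,
    IsZeroError C.base ∧ IsLinear C.base ∧
    ((C.base.stor 0 + C.base.stor 1 : ℕ) : ℝ) / 2 ≤ L * (ab.1 + ε) ∧
    (betaRate C.base 0 + betaRate C.base 1) / 2 ≤ L * (ab.2 + ε)

/-- The achievable storage-retrieval rate region `R`. -/
def Region : Set (ℝ × ℝ) := { ab | Achievable ab }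

/-- The query distribution used for the `(2,2)` PIR system: for message 1,
uniform on `{(1,1),(2,2)}`; for message 2, uniform on `{(1,2),(2,1)}`. -/
noncomputable def stdP : Fin 2 → Fin 2 × Fin 2 → ℝ :=
  fun k qq => if (k = 0 ∧ qq.1 = qq.2) ∨ (k = 1 ∧ qq.1 ≠ qq.2) then 1/2 else 0


/-- Regrouping of pairs of queries: database-wise to copy-wise. -/
def regroup (Q : Type) : (Q × Q) × (Q × Q) ≃ (Q × Q) × (Q × Q) where
  toFun x := ((x.1.1, x.2.2), (x.2.1, x.1.2))
  invFun x := ((x.1.1, x.2.2), (x.2.1, x.1.2))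
  left_inv _ := rfl
  right_inv _ := rfl

theorem sum_regroup (f : Q × Q → Q × Q → ℝ) :
    ∑ x : (Q × Q) × (Q × Q), f (x.1.1, x.2.2) (x.2.1, x.1.2) = ∑ u, ∑ v, f u v := by
  rw [← Fintype.sum_prod_type']
  exact (regroup Q).sum_comp (fun y => f y.1 y.2)

/-- One of the two halves of a message. -/
def half (i : Fin 2) (m : Msg (2 * L)) : Msg L := fun j => m (finProdFinEquiv (i, j))

/-- The corresponding half of a pair of messages. -/
def halves (i : Fin 2) (w : Msg (2 * L) × Msg (2 * L)) : Msg L × Msg L :=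
  (half i w.1, half i w.2)

/-- Glue two halves together. -/
def join (u v : Msg L) : Msg (2 * L) := fun t =>
  if (finProdFinEquiv.symm t).1 = 0 then u (finProdFinEquiv.symm t).2
  else v (finProdFinEquiv.symm t).2

theorem join_half (m : Msg (2 * L)) : join (half 0 m) (half 1 m) = m := by
  funext t
  obtain ⟨⟨i, j⟩, rfl⟩ := (finProdFinEquiv (m := 2) (n := L)).surjective t
  unfold join half
  rw [Equiv.symm_apply_apply]
  fin_cases i <;> simp

theorem marginal_eq (C : CodeBase L Q) (n : Fin 2) (q : Q) :
    (∑ qq : Q × Q, if (if n = 0 then qq.1 else qq.2) = q then C.P 0 qq else 0) =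
    (∑ qq : Q × Q, if (if n = 0 then qq.1 else qq.2) = q then C.P 1 qq else 0) := by
  have h := C.privacy n q (C.phi n 0)
  refine mul_right_cancel₀ ?_ h
  have : 0 < (Finset.univ.filter
      (fun w : Msg L × Msg L => C.phi n w = C.phi n 0)).card :=
    Finset.card_pos.mpr ⟨0, by simp⟩
  exact_mod_cast this.ne'

theorem sum_left (C : CodeBase L Q) (k : Fin 2) (q : Q × Q) :
    (∑ x : (Q × Q) × (Q × Q), if x.1 = q then
      C.P k (x.1.1, x.2.2) * C.P k (x.2.1, x.1.2) else 0) =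
    (∑ u : Q × Q, if u.1 = q.1 then C.P k u else 0) *
    (∑ u : Q × Q, if u.2 = q.2 then C.P k u else 0) := by
  have := sum_regroup (Q := Q) (fun u v => if (u.1, v.2) = q then C.P k u * C.P k v else 0)
  refine this.trans ?_
  rw [Finset.sum_mul_sum]
  refine Finset.sum_congr rfl fun u _ => Finset.sum_congr rfl fun v _ => ?_
  simp only [Prod.ext_iff]
  split_ifs <;> simp_all

theorem sum_right (C : CodeBase L Q) (k : Fin 2) (q : Q × Q) :
    (∑ x : (Q × Q) × (Q × Q), if x.2 = q then
      C.P k (x.1.1, x.2.2) * C.P k (x.2.1, x.1.2) else 0) =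
    (∑ u : Q × Q, if u.2 = q.2 then C.P k u else 0) *
    (∑ u : Q × Q, if u.1 = q.1 then C.P k u else 0) := by
  have := sum_regroup (Q := Q) (fun u v => if (v.1, u.2) = q then C.P k u * C.P k v else 0)
  refine this.trans ?_
  rw [Finset.sum_mul_sum]
  refine Finset.sum_congr rfl fun u _ => Finset.sum_congr rfl fun v _ => ?_
  simp only [Prod.ext_iff]
  split_ifs <;> simp_all

/-- The symmetrized code: two copies, with the roles of the databases exchanged in
the second one. -/
def symBase (C : CodeBase L Q) : CodeBase (2 * L) (Q × Q) where
  P k x := C.P k (x.1.1, x.2.2) * C.P k (x.2.1, x.1.2)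
  P_nonneg k x := mul_nonneg (C.P_nonneg _ _) (C.P_nonneg _ _)
  P_sum k := by
    rw [sum_regroup (fun u v => C.P k u * C.P k v), ← Finset.sum_mul_sum, C.P_sum, one_mul]
  stor _ := C.stor 0 + C.stor 1
  phi n w := Fin.append (C.phi 0 (halves n w)) (C.phi 1 (halves (1 - n) w))
  blen _ q := C.blen 0 q.1 + C.blen 1 q.2
  ans _ q s := Fin.append (C.ans 0 q.1 (fun i => s (Fin.castAdd _ i)))
    (C.ans 1 q.2 (fun i => s (Fin.natAdd _ i)))
  dec k q r a b := join
    (C.dec k q.1 r.2 (fun i => a (Fin.castAdd _ i)) (fun i => b (Fin.natAdd _ i)))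
    (C.dec k r.1 q.2 (fun i => b (Fin.castAdd _ i)) (fun i => a (Fin.natAdd _ i)))
  privacy n q s := by
    have h0 := marginal_eq C 0 q.1
    have h1 := marginal_eq C 1 q.2
    simp only [if_true, one_ne_zero, if_false] at h0 h1
    congr 1
    by_cases hn : n = 0
    · simp only [hn, if_true]
      rw [sum_left, sum_left, h0, h1]
    · simp only [hn, if_false]
      rw [sum_right, sum_right, h0, h1]

theorem symBase_zeroError (C : CodeBase L Q) (hC : IsZeroError C) :
    IsZeroError (symBase C) := by
  intro k w x hx
  have h1 := hC k (halves 0 w) (x.1.1, x.2.2) (left_ne_zero_of_mul hx)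
  have h2 := hC k (halves 1 w) (x.2.1, x.1.2) (right_ne_zero_of_mul hx)
  have ht : ∀ i, target k (halves i w) = half i (target k w) := by
    intro i; unfold target halves; split_ifs <;> rfl
  rw [ht] at h1 h2
  rw [← join_half (target k w), ← h1, ← h2]
  simp [retrieved, symBase]

theorem symBase_rate (C : CodeBase L Q) (n : Fin 2) :
    betaRate (symBase C) n = betaRate C 0 + betaRate C 1 := by
  have key : ∀ f g : Q × Q → ℝ,
      ∑ u, ∑ v, (C.P 0 u * C.P 0 v) * (f u + g v) =
        ∑ u, C.P 0 u * f u + ∑ v, C.P 0 v * g v := by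
    intro f g
    have h : ∀ u v, (C.P 0 u * C.P 0 v) * (f u + g v) =
      (C.P 0 u * f u) * C.P 0 v + C.P 0 u * (C.P 0 v * g v) := by intros; ring
    simp only [h, Finset.sum_add_distrib, ← Finset.sum_mul_sum, C.P_sum, one_mul, mul_one]
  unfold betaRate
  by_cases hn : n = 0
  · simp only [hn, if_true, one_ne_zero, if_false, symBase, Nat.cast_add]
    rw [← key]
    exact sum_regroup (fun u v => (C.P 0 u * C.P 0 v) * ((C.blen 0 u.1 : ℝ) + C.blen 1 v.2))
  · simp only [hn, if_true, one_ne_zero, if_false, symBase, Nat.cast_add]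
    rw [add_comm, ← key]
    refine (sum_regroup (fun u v =>
      (C.P 0 u * C.P 0 v) * ((C.blen 0 v.1 : ℝ) + C.blen 1 u.2))).trans ?_
    simp only [add_comm]

/-- If an `(L, α1, α2, β1, β2)` zero-error (2,2) PIR code exists, then a
`(2L, α1+α2, α1+α2, β1+β2, β1+β2)` zero-error (2,2) PIR code exists. -/
theorem statement0 {L : ℕ} (C : Code L) (hC : IsZeroError C.base) :
    ∃ C' : Code (2 * L),
      IsZeroError C'.base ∧
      C'.base.stor 0 = C.base.stor 0 + C.base.stor 1 ∧
      C'.base.stor 1 = C.base.stor 0 + C.base.stor 1 ∧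
      betaRate C'.base 0 = betaRate C.base 0 + betaRate C.base 1 ∧
      betaRate C'.base 1 = betaRate C.base 0 + betaRate C.base 1 := by
  exact ⟨⟨C.Q × C.Q, symBase C.base⟩, symBase_zeroError _ hC, rfl, rfl,
    symBase_rate _ 0, symBase_rate _ 1⟩

end PIR
end

section
/- For every integer t ≥ 1, the region R^{(t)}_in is contained in the achievable storage-retrieval rate region R of the (2,2) PIR problem. -/
open scoped BigOperators

namespace PIR

variable {L : ℕ} {Q : Type} [Fintype Q] [DecidableEq Q]

/-- Probability that a random variable `X` (on finite sample space `Ω` with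
probability mass function `p`) takes the value `x`. -/
noncomputable def prOf {Ω : Type} [Fintype Ω] {γ : Type} [DecidableEq γ]
    (p : Ω → ℝ) (X : Ω → γ) (x : γ) : ℝ :=
  ∑ ω : Ω, if X ω = x then p ω else 0

/-- Shannon entropy (in bits) of the random variable `X`. -/
noncomputable def ent {Ω : Type} [Fintype Ω] {γ : Type} [Fintype γ] [DecidableEq γ]
    (p : Ω → ℝ) (X : Ω → γ) : ℝ :=
  ∑ x : γ, -(prOf p X x * Real.logb 2 (prOf p X x))

/-- Conditional entropy `H(X|Y) = H(X,Y) - H(Y)` (in bits). -/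
noncomputable def condEnt {Ω : Type} [Fintype Ω] {γ δ : Type} [Fintype γ] [DecidableEq γ]
    [Fintype δ] [DecidableEq δ] (p : Ω → ℝ) (X : Ω → γ) (Y : Ω → δ) : ℝ :=
  ent p (fun ω => (X ω, Y ω)) - ent p Y

/-- Mutual information `I(X;Y)` (in bits). -/
noncomputable def mi {Ω : Type} [Fintype Ω] {γ δ : Type} [Fintype γ] [DecidableEq γ]
    [Fintype δ] [DecidableEq δ] (p : Ω → ℝ) (X : Ω → γ) (Y : Ω → δ) : ℝ :=
  ent p X + ent p Y - ent p (fun ω => (X ω, Y ω))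

/-- Conditional mutual information `I(X;Y|Z)` (in bits). -/
noncomputable def cmi {Ω : Type} [Fintype Ω] {γ δ ε : Type} [Fintype γ] [DecidableEq γ]
    [Fintype δ] [DecidableEq δ] [Fintype ε] [DecidableEq ε]
    (p : Ω → ℝ) (X : Ω → γ) (Y : Ω → δ) (Z : Ω → ε) : ℝ :=
  ent p (fun ω => (X ω, Z ω)) + ent p (fun ω => (Y ω, Z ω))
    - ent p (fun ω => (X ω, Y ω, Z ω)) - ent p Z

/-- Joint entropy `H({U_i, i ∈ A})` of the subfamily indexed by `A`. -/
noncomputable def jEnt {Ω : Type} [Fintype Ω] {γ : Type} [Fintype γ] [DecidableEq γ]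
    {M : ℕ} (p : Ω → ℝ) (U : Fin M → Ω → γ) (A : Finset (Fin M)) : ℝ :=
  ent p (fun ω => fun i : {i // i ∈ A} => U i.1 ω)

/-- Conditional joint entropy `H({U_j, j ∈ J} | {U_j', j' ∈ B})`. -/
noncomputable def cjEnt {Ω : Type} [Fintype Ω] {γ : Type} [Fintype γ] [DecidableEq γ]
    {M : ℕ} (p : Ω → ℝ) (U : Fin M → Ω → γ) (J B : Finset (Fin M)) : ℝ :=
  jEnt p U (J ∪ B) - jEnt p U B

/-- Conditional joint entropy `H({U_i, i ∈ A} | S)`. -/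
noncomputable def jEntCondS {Ω : Type} [Fintype Ω] {γ τ : Type} [Fintype γ] [DecidableEq γ]
    [Fintype τ] [DecidableEq τ] {M : ℕ}
    (p : Ω → ℝ) (U : Fin M → Ω → γ) (A : Finset (Fin M)) (S : Ω → τ) : ℝ :=
  ent p (fun ω => ((fun i : {i // i ∈ A} => U i.1 ω), S ω)) - ent p S

/-- The binned multiple-description region `R*_MD((S,U_1,…,U_M), ({U_j, j∈A}, A ∈ recs))`:
the rate vectors `(R, R')` with `0 ≤ R_i ≤ R'_i`,
`Σ_{i∈A} R'_i ≥ Σ_{i∈A} H(U_i) − H({U_i,i∈A}|S)` for every `A ⊆ {1,…,M}`, and for every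
reconstruction set `B ∈ recs` and every `J ⊆ B`,
`Σ_{j∈J}(R'_j − R_j) ≤ Σ_{j∈J} H(U_j) − H({U_j,j∈J} | {U_{j'}, j' ∈ B \ J})`. -/
def RstarMD {Ω γ τ : Type} [Fintype Ω] [Fintype γ] [DecidableEq γ] [Fintype τ] [DecidableEq τ]
    {M : ℕ} (p : Ω → ℝ) (S : Ω → τ) (U : Fin M → Ω → γ)
    (recs : Finset (Finset (Fin M))) (R R' : Fin M → ℝ) : Prop :=
  (∀ i, 0 ≤ R i ∧ R i ≤ R' i) ∧
  (∀ A : Finset (Fin M), (∑ i ∈ A, ent p (U i)) - jEntCondS p U A S ≤ ∑ i ∈ A, R' i) ∧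
  (∀ B ∈ recs, ∀ J ⊆ B,
    ∑ j ∈ J, (R' j - R j) ≤ (∑ j ∈ J, ent p (U j)) - cjEnt p U J (B \ J))

/-- Random variables `(X0,X1,X2,Y1,Y2)` (indexed `0,…,4`) jointly distributed with the pair
of messages `(V1,V2)` which is uniform on `F_2^t × F_2^t`. -/
structure RVSetup (t : ℕ) where
  Ω : Type
  [fΩ : Fintype Ω]
  p : Ω → ℝ
  p_nonneg : ∀ ω, 0 ≤ p ω
  p_sum : ∑ ω : Ω, p ω = 1
  γ : Type
  [fγ : Fintype γ]
  [dγ : DecidableEq γ]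
  V : Ω → Msg t × Msg t
  X : Fin 5 → Ω → γ
  V_unif : ∀ v : Msg t × Msg t, prOf p V v = ((2:ℝ)^(2*t))⁻¹

attribute [instance] RVSetup.fΩ RVSetup.fγ RVSetup.dγ

/-- The four reconstruction sets `{X0,X1,Y1},{X0,X1,Y2},{X0,X2,Y1},{X0,X2,Y2}` with the
indexing `0 ↦ X0, 1 ↦ X1, 2 ↦ X2, 3 ↦ Y1, 4 ↦ Y2`. -/
def recs5 : Finset (Finset (Fin 5)) := {{0,1,3}, {0,1,4}, {0,2,3}, {0,2,4}}

/-- The inner-bound region `R^{(t)}_in`. -/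
def RinMem (t : ℕ) (ab : ℝ × ℝ) : Prop :=
  ∃ S : RVSetup t,
    -- (1) decodability of V1 and V2 from the prescribed triples
    (∃ (f11 f12 f21 f22 : S.γ × S.γ × S.γ → Msg t),
      ∀ ω, S.p ω ≠ 0 →
        (S.V ω).1 = f11 (S.X 0 ω, S.X 1 ω, S.X 3 ω) ∧
        (S.V ω).1 = f22 (S.X 0 ω, S.X 2 ω, S.X 4 ω) ∧
        (S.V ω).2 = f12 (S.X 0 ω, S.X 1 ω, S.X 4 ω) ∧
        (S.V ω).2 = f21 (S.X 0 ω, S.X 2 ω, S.X 3 ω)) ∧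
    -- (2),(3),(4): existence of rates
    (∃ β γr : Fin 5 → ℝ,
      RstarMD S.p S.V S.X recs5 β γr ∧
      ∃ α : Fin 5 → ℝ,
        (∀ i, 0 ≤ α i ∧ α i ≤ β i) ∧
        ((γr 0 - β 0) + (γr 1 - β 1) + (γr 2 - β 2) <
            ent S.p (S.X 0) + ent S.p (S.X 1) + ent S.p (S.X 2)
              - jEnt S.p S.X {0,1,2} →
          RstarMD S.p S.V ![S.X 0, S.X 1, S.X 2] {(Finset.univ : Finset (Fin 3))}
            ![α 0, α 1, α 2] ![γr 0, γr 1, γr 2]) ∧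
        (¬ ((γr 0 - β 0) + (γr 1 - β 1) + (γr 2 - β 2) <
            ent S.p (S.X 0) + ent S.p (S.X 1) + ent S.p (S.X 2)
              - jEnt S.p S.X {0,1,2}) →
          α 0 = β 0 ∧ α 1 = β 1 ∧ α 2 = β 2) ∧
        ((γr 3 - β 3) + (γr 4 - β 4) < mi S.p (S.X 3) (S.X 4) →
          RstarMD S.p S.V ![S.X 3, S.X 4] {(Finset.univ : Finset (Fin 2))}
            ![α 3, α 4] ![γr 3, γr 4]) ∧
        (¬ ((γr 3 - β 3) + (γr 4 - β 4) < mi S.p (S.X 3) (S.X 4)) →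
          α 3 = β 3 ∧ α 4 = β 4) ∧
        2 * t * ab.1 ≥ α 0 + α 1 + α 2 + α 3 + α 4 ∧
        4 * t * ab.2 ≥ 2 * β 0 + β 1 + β 2 + β 3 + β 4)
lemma count_one {M : ℕ} {Y : Type} [Fintype Y] [DecidableEq Y] (a : Fin M) (y : Y) :
    (Finset.univ.filter (fun c : Fin M → Y => c a = y)).card * Fintype.card Y
      = Fintype.card Y ^ M := by
  classical
  have h : (Finset.univ.filter (fun c : Fin M → Y => c a = y))
      = Fintype.piFinset (fun j => if j = a then {y} else Finset.univ) := by
    ext c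
    simp only [Finset.mem_filter, Finset.mem_univ, true_and, Fintype.mem_piFinset]
    constructor
    · intro h j
      split_ifs with hj
      · simp [hj, h]
      · simp
    · intro h
      simpa using h a
  rw [h, Fintype.card_piFinset]
  have : ∀ j, (if j = a then ({y} : Finset Y) else Finset.univ).card
      = if j = a then 1 else Fintype.card Y := by
    intro j; split_ifs <;> simp
  simp only [this]
  rw [Finset.prod_ite, Finset.prod_const_one, one_mul, Finset.prod_const, ← pow_succ]
  congr 1
  have : (Finset.univ.filter (fun x : Fin M => ¬ x = a)) = Finset.univ.erase a := by
    ext; simp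
  rw [this, Finset.card_erase_of_mem (Finset.mem_univ _)]
  have := a.pos
  simp; omega

lemma count_two {M : ℕ} {Y : Type} [Fintype Y] [DecidableEq Y] (a b : Fin M) (hab : a ≠ b)
    (y y' : Y) :
    (Finset.univ.filter (fun c : Fin M → Y => c a = y ∧ c b = y')).card * Fintype.card Y ^ 2
      = Fintype.card Y ^ M := by
  classical
  have h : (Finset.univ.filter (fun c : Fin M → Y => c a = y ∧ c b = y'))
      = Fintype.piFinset (fun j => if j = a then {y} else if j = b then {y'} else Finset.univ) := by
    ext c
    simp only [Finset.mem_filter, Finset.mem_univ, true_and, Fintype.mem_piFinset]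
    constructor
    · intro h j
      split_ifs with hj hj'
      · simp [hj, h.1]
      · simp [hj', h.2]
      · simp
    · intro h
      have h1 := h a
      have h2 := h b
      simp [hab.symm] at h1 h2
      exact ⟨h1, h2⟩
  rw [h, Fintype.card_piFinset]
  have : ∀ j, (if j = a then ({y} : Finset Y) else if j = b then {y'} else Finset.univ).card
      = if j = a ∨ j = b then 1 else Fintype.card Y := by
    intro j; split_ifs <;> simp_all
  simp only [this]
  rw [Finset.prod_ite, Finset.prod_const_one, one_mul, Finset.prod_const, ← pow_add]
  congr 1
  have : (Finset.univ.filter (fun x : Fin M => ¬ (x = a ∨ x = b)))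
      = Finset.univ \ {a, b} := by
    ext; simp
  rw [this, Finset.card_sdiff_of_subset (Finset.subset_univ _), Finset.card_pair hab]
  have := a.isLt
  have := b.isLt
  have : (a : ℕ) ≠ b := fun h => hab (Fin.ext h)
  simp; omega

section oneshot
variable {ι : Type} [Fintype ι] [DecidableEq ι] {M : ι → ℕ} {Y : ι → Type}
  [∀ i, Fintype (Y i)] [∀ i, DecidableEq (Y i)]

/-- number of codebooks with prescribed values at two index tuples -/
lemma count_pt (hY : ∀ i, Nonempty (Y i)) (m m' : ∀ i, Fin (M i)) (y y' : ∀ i, Y i) :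
    ((Finset.univ.filter (fun c : ∀ i, Fin (M i) → Y i =>
        (∀ i, c i (m i) = y i) ∧ ∀ i, c i (m' i) = y' i)).card : ℝ)
      ≤ if (∀ i, m i = m' i → y' i = y i) then
        (Fintype.card (∀ i, Fin (M i) → Y i) : ℝ) / ((∏ i, (Fintype.card (Y i) : ℝ)) *
          ∏ i with m i ≠ m' i, (Fintype.card (Y i) : ℝ)) else 0 := by
  classical
  split_ifs with h
  · have h1 : (Finset.univ.filter (fun c : ∀ i, Fin (M i) → Y i =>
        (∀ i, c i (m i) = y i) ∧ ∀ i, c i (m' i) = y' i))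
        = Fintype.piFinset (fun i => Finset.univ.filter
          (fun c : Fin (M i) → Y i => c (m i) = y i ∧ c (m' i) = y' i)) := by
      ext c
      simp [Fintype.mem_piFinset, forall_and]
    rw [h1, Fintype.card_piFinset, Fintype.card_pi, Finset.prod_filter, ← Finset.prod_mul_distrib]
    push_cast
    rw [← Finset.prod_div_distrib]
    apply le_of_eq
    apply Finset.prod_congr rfl
    intro i _
    have hpos : (Fintype.card (Y i) : ℝ) ≠ 0 := by
      have := Fintype.card_pos_iff.mpr (hY i)
      positivity
    by_cases hm : m i = m' i
    · have := count_one (m i) (y i)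
      simp only [hm, ne_eq, not_true_eq_false, if_false, mul_one]
      rw [eq_div_iff hpos]
      simp only [hm] at this
      have h2 : (Finset.univ.filter (fun c : Fin (M i) → Y i => c (m' i) = y i ∧ c (m' i) = y' i))
        = Finset.univ.filter (fun c : Fin (M i) → Y i => c (m' i) = y i) := by
        rw [h i hm]; simp
      rw [h2]
      simp
      exact_mod_cast this
    · have := count_two (m i) (m' i) hm (y i) (y' i)
      simp only [ne_eq, hm, not_false_eq_true, if_true]
      rw [eq_div_iff (mul_ne_zero hpos hpos), ← pow_two]
      simp
      exact_mod_cast this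
  · push Not at h
    obtain ⟨i, hi, hy⟩ := h
    simp only [Nat.cast_nonpos, Finset.card_eq_zero]
    apply Finset.filter_eq_empty_iff.mpr
    rintro c - ⟨h1, h2⟩
    apply hy
    rw [← h1, ← h2, hi]

lemma count_single (hY : ∀ i, Nonempty (Y i)) (m : ∀ i, Fin (M i)) (F : Finset (∀ i, Y i)) :
    ((Finset.univ.filter (fun c : ∀ i, Fin (M i) → Y i => (fun i => c i (m i)) ∈ F)).card : ℝ)
      = (Fintype.card (∀ i, Fin (M i) → Y i) : ℝ) * F.card / ∏ i, (Fintype.card (Y i) : ℝ) := by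
  classical
  rw [Finset.card_eq_sum_card_fiberwise (f := fun c : ∀ i, Fin (M i) → Y i => fun i => c i (m i))
    (t := F) (by intro c hc; simpa using hc)]
  push_cast
  have : ∀ y ∈ F, (((Finset.univ.filter (fun c : ∀ i, Fin (M i) → Y i =>
      (fun i => c i (m i)) ∈ F)).filter (fun c => (fun i => c i (m i)) = y)).card : ℝ)
      = (Fintype.card (∀ i, Fin (M i) → Y i) : ℝ) / ∏ i, (Fintype.card (Y i) : ℝ) := by
    intro y hy
    have h1 : ((Finset.univ.filter (fun c : ∀ i, Fin (M i) → Y i =>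
      (fun i => c i (m i)) ∈ F)).filter (fun c => (fun i => c i (m i)) = y))
        = Fintype.piFinset (fun i => Finset.univ.filter
          (fun c : Fin (M i) → Y i => c (m i) = y i)) := by
      ext c
      simp only [Finset.mem_filter, Finset.mem_univ, true_and, Fintype.mem_piFinset]
      constructor
      · rintro ⟨_, h⟩ i
        rw [← h]
      · intro h
        have : (fun i => c i (m i)) = y := funext h
        exact ⟨this ▸ hy, this⟩
    rw [h1, Fintype.card_piFinset, Fintype.card_pi]
    push_cast
    rw [← Finset.prod_div_distrib]
    apply Finset.prod_congr rfl
    intro i _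
    have hpos : (Fintype.card (Y i) : ℝ) ≠ 0 := by
      have := Fintype.card_pos_iff.mpr (hY i)
      positivity
    rw [eq_div_iff hpos]
    have := count_one (m i) (y i)
    simp
    exact_mod_cast this
  rw [Finset.sum_congr rfl this]
  simp
  ring

lemma count_pair (hY : ∀ i, Nonempty (Y i)) (m m' : ∀ i, Fin (M i)) (F F' : Finset (∀ i, Y i))
    (κ : ℝ) (hκ : ∀ y ∈ F, ((F'.filter (fun y' => ∀ i, m i = m' i → y' i = y i)).card : ℝ) ≤ κ) :
    ((Finset.univ.filter (fun c : ∀ i, Fin (M i) → Y i =>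
        (fun i => c i (m i)) ∈ F ∧ (fun i => c i (m' i)) ∈ F')).card : ℝ)
      ≤ (Fintype.card (∀ i, Fin (M i) → Y i) : ℝ) * F.card * κ / ((∏ i, (Fintype.card (Y i) : ℝ)) *
          ∏ i with m i ≠ m' i, (Fintype.card (Y i) : ℝ)) := by
  classical
  set N : ℝ := (Fintype.card (∀ i, Fin (M i) → Y i) : ℝ) / ((∏ i, (Fintype.card (Y i) : ℝ)) *
          ∏ i with m i ≠ m' i, (Fintype.card (Y i) : ℝ)) with hN
  have hN0 : 0 ≤ N := by positivity
  rw [Finset.card_eq_sum_card_fiberwise (f := fun c : ∀ i, Fin (M i) → Y i =>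
    ((fun i => c i (m i)), (fun i => c i (m' i))))
    (t := F ×ˢ F') (by intro c hc; simpa using hc)]
  push_cast
  rw [Finset.sum_product]
  calc _ ≤ ∑ y ∈ F, ∑ y' ∈ F', (if (∀ i, m i = m' i → y' i = y i) then N else 0) := by
        apply Finset.sum_le_sum; intro y hy
        apply Finset.sum_le_sum; intro y' hy'
        refine le_trans ?_ (count_pt hY m m' y y')
        norm_cast
        apply Finset.card_le_card
        intro c hc
        simp only [Finset.mem_filter, Finset.mem_univ, true_and, Prod.mk.injEq] at hc ⊢
        exact ⟨fun i => congrFun hc.2.1 i, fun i => congrFun hc.2.2 i⟩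
    _ ≤ ∑ y ∈ F, κ * N := by
        apply Finset.sum_le_sum; intro y hy
        rw [← Finset.sum_filter, Finset.sum_const, nsmul_eq_mul]
        exact mul_le_mul_of_nonneg_right (hκ y hy) hN0
    _ = _ := by
        rw [Finset.sum_const, nsmul_eq_mul, hN]; ring
end oneshot

lemma dc {α β : Type} [Fintype α] [Fintype β] (R : α → β → Prop) [∀ a b, Decidable (R a b)] :
    ∑ a, ((Finset.univ.filter (fun b => R a b)).card : ℝ)
      = ∑ b, ((Finset.univ.filter (fun a => R a b)).card : ℝ) := by
  simp only [Finset.card_filter]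
  push_cast
  exact Finset.sum_comm

lemma card_bin {M : ℕ} (c : ℕ) (hc : 1 ≤ c) (x : Fin M) :
    ((Finset.univ.filter (fun z : Fin M => (z : ℕ) / c = x / c ∧ z ≠ x)).card : ℝ) ≤ (c : ℝ) - 1 := by
  classical
  have h : (Finset.univ.filter (fun z : Fin M => (z : ℕ) / c = x / c ∧ z ≠ x)).card + 1 ≤ c := by
    have h1 : ((Finset.univ.filter (fun z : Fin M => (z : ℕ) / c = x / c ∧ z ≠ x)).image
        (fun z : Fin M => (z : ℕ) % c)) ⊆ (Finset.range c).erase (x % c) := by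
      intro z hz
      simp only [Finset.mem_image, Finset.mem_filter, Finset.mem_univ, true_and] at hz
      obtain ⟨a, ⟨h1, h2⟩, rfl⟩ := hz
      simp only [Finset.mem_erase, Finset.mem_range]
      refine ⟨?_, Nat.mod_lt _ hc⟩
      intro h3
      apply h2
      apply Fin.ext
      rw [← Nat.div_add_mod a c, ← Nat.div_add_mod x c, h1, h3]
    have h2 := Finset.card_le_card h1
    rw [Finset.card_image_of_injOn, Finset.card_erase_of_mem, Finset.card_range] at h2
    · omega
    · simp; exact Nat.mod_lt _ hc
    · intro a ha b hb hab
      simp only [Finset.coe_filter, Set.mem_ofPred_eq, Finset.mem_univ, true_and] at ha hb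
      apply Fin.ext
      have hab' : (a : ℕ) % c = (b : ℕ) % c := hab
      rw [← Nat.div_add_mod a c, ← Nat.div_add_mod b c, ha.1, hb.1, hab']
  have : ((Finset.univ.filter (fun z : Fin M => (z : ℕ) / c = x / c ∧ z ≠ x)).card : ℝ) + 1 ≤ c := by
    exact_mod_cast h
  linarith

section oneshot
variable {ι : Type} [Fintype ι] [DecidableEq ι] {M : ι → ℕ} {Y : ι → Type}
  [∀ i, Fintype (Y i)] [∀ i, DecidableEq (Y i)]

/-- The index tuple `m` is a good choice for the codebook `c`. -/
def GoodIdx {Δ : Type} (D : Finset (∀ i, Y i)) (B : Δ → Finset ι) (cs : Δ → ι → ℕ)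
    (P : Δ → Finset (∀ i, Y i)) (c : ∀ i, Fin (M i) → Y i) (m : ∀ i, Fin (M i)) : Prop :=
  (fun i => c i (m i)) ∈ D ∧ ∀ d, ∀ m' : ∀ i, Fin (M i),
    (∀ i ∈ B d, (m' i : ℕ) / cs d i = m i / cs d i) → (fun i => c i (m' i)) ∈ P d →
      ∀ i ∈ B d, m' i = m i

lemma sum_sq_bound (hY : ∀ i, Nonempty (Y i))
    (D : Finset (∀ i, Y i)) (K : ℝ)
    (κa : Finset ι → ℝ)
    (ha1 : ∀ E : Finset ι, ∀ y ∈ D, ((D.filter (fun y' => ∀ i ∈ E, y' i = y i)).card : ℝ) ≤ κa E)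
    (ha2 : ∀ E : Finset ι, κa E * ∏ i ∈ E, (Fintype.card (Y i) : ℝ)
      ≤ K * D.card * ∏ i ∈ E, (M i : ℝ)) :
    ∑ c : (∀ i, Fin (M i) → Y i),
      ((Finset.univ.filter (fun m : ∀ i, Fin (M i) => (fun i => c i (m i)) ∈ D)).card : ℝ) ^ 2
    ≤ 2 ^ Fintype.card ι * K * ((∏ i, (M i : ℝ)) ^ 2 *
      (Fintype.card (∀ i, Fin (M i) → Y i) : ℝ) * D.card ^ 2 /
        (∏ i, (Fintype.card (Y i) : ℝ)) ^ 2) := by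
  classical
  set C : ℝ := (Fintype.card (∀ i, Fin (M i) → Y i) : ℝ) with hC
  set q : ι → ℝ := fun i => (Fintype.card (Y i) : ℝ) with hq
  have hqpos : ∀ i, 0 < q i := fun i => by
    have := Fintype.card_pos_iff.mpr (hY i)
    simp only [hq]; positivity
  have hqq : 0 < ∏ i, q i := Finset.prod_pos fun i _ => hqpos i
  have hC0 : 0 ≤ C := by positivity
  let f : Finset ι → ℝ := fun J =>
    C * D.card ^ 2 * K * (∏ i ∈ Finset.univ \ J, (M i : ℝ)) / (∏ i, q i) ^ 2
  have step1 : ∀ c : (∀ i, Fin (M i) → Y i),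
      ((Finset.univ.filter (fun m : ∀ i, Fin (M i) => (fun i => c i (m i)) ∈ D)).card : ℝ) ^ 2
      = ((Finset.univ.filter (fun mm : (∀ i, Fin (M i)) × (∀ i, Fin (M i)) =>
        (fun i => c i (mm.1 i)) ∈ D ∧ (fun i => c i (mm.2 i)) ∈ D)).card : ℝ) := by
    intro c
    rw [pow_two, ← Nat.cast_mul, ← Finset.card_product]
    congr 2
    ext mm
    simp
  rw [Finset.sum_congr rfl (fun c _ => step1 c), dc, Fintype.sum_prod_type]
  have hprodsplit : ∀ (J : Finset ι) (g : ι → ℝ), (∏ i ∈ J, g i) * ∏ i ∈ Finset.univ \ J, g i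
      = ∏ i, g i := fun J g => by
    rw [mul_comm]; exact Finset.prod_sdiff (Finset.subset_univ J)
  have step2 : ∀ m m' : (∀ i, Fin (M i)),
      ((Finset.univ.filter (fun c : ∀ i, Fin (M i) → Y i =>
        (fun i => c i (m i)) ∈ D ∧ (fun i => c i (m' i)) ∈ D)).card : ℝ)
      ≤ f (Finset.univ.filter (fun i => m i ≠ m' i)) := by
    intro m m'
    set J := Finset.univ.filter (fun i => m i ≠ m' i) with hJ
    have h := count_pair hY m m' D D (κa (Finset.univ \ J)) (by
      intro y hy
      refine le_trans ?_ (ha1 _ y hy)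
      norm_cast
      apply Finset.card_le_card
      intro y' hy'
      simp only [Finset.mem_filter] at hy' ⊢
      refine ⟨hy'.1, fun i hi => hy'.2 i ?_⟩
      simpa [hJ] using hi)
    refine h.trans ?_
    have h2 := ha2 (Finset.univ \ J)
    change C * D.card * κa (Finset.univ \ J) / ((∏ i, q i) * ∏ i ∈ J, q i) ≤
      C * D.card ^ 2 * K * (∏ i ∈ Finset.univ \ J, (M i : ℝ)) / (∏ i, q i) ^ 2
    have hJpos : 0 < ∏ i ∈ J, q i := Finset.prod_pos fun i _ => hqpos i
    rw [div_le_div_iff₀ (by positivity) (by positivity)]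
    have h3 := hprodsplit J q
    calc C * D.card * κa (Finset.univ \ J) * (∏ i, q i) ^ 2
        = (C * D.card * (∏ i, q i) * (∏ i ∈ J, q i)) *
          (κa (Finset.univ \ J) * ∏ i ∈ Finset.univ \ J, q i) := by
          rw [pow_two]; nth_rewrite 2 [← h3]; ring
      _ ≤ (C * D.card * (∏ i, q i) * (∏ i ∈ J, q i)) *
          (K * D.card * ∏ i ∈ Finset.univ \ J, (M i : ℝ)) := by
          apply mul_le_mul_of_nonneg_left h2; positivity
      _ = _ := by ring
  have step3 : ∀ (m : ∀ i, Fin (M i)) (J : Finset ι),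
      ((Finset.univ.filter (fun m' : ∀ i, Fin (M i) =>
        Finset.univ.filter (fun i => m i ≠ m' i) = J)).card : ℝ) ≤ ∏ i ∈ J, (M i : ℝ) := by
    intro m J
    have : (Finset.univ.filter (fun m' : ∀ i, Fin (M i) =>
        Finset.univ.filter (fun i => m i ≠ m' i) = J)) ⊆
        Fintype.piFinset (fun i => if i ∈ J then Finset.univ else {m i}) := by
      intro m' hm'
      simp only [Finset.mem_filter, Finset.mem_univ, true_and] at hm'
      simp only [Fintype.mem_piFinset]
      intro i
      split_ifs with hi
      · simp
      · rw [← hm'] at hi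
        simp at hi
        simp [hi]
    have h := Finset.card_le_card this
    rw [Fintype.card_piFinset] at h
    have h2 : ∏ i, (if i ∈ J then (Finset.univ : Finset (Fin (M i))) else {m i}).card
        = ∏ i ∈ J, M i := by
      rw [← Finset.prod_subset (Finset.subset_univ J)]
      · apply Finset.prod_congr rfl
        intro i hi; simp [hi]
      · intro i _ hi; simp [hi]
    rw [h2] at h
    exact_mod_cast h
  have hf0 : ∀ J, 0 ≤ K * D.card * ∏ i ∈ J, (M i : ℝ) → 0 ≤ f (Finset.univ \ J) := by
    intro J h
    simp only [f]
    rw [Finset.sdiff_sdiff_eq_self (Finset.subset_univ J)]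
    apply div_nonneg _ (by positivity)
    calc (0:ℝ) ≤ C * D.card * (K * D.card * ∏ i ∈ J, (M i : ℝ)) := by positivity
      _ = _ := by ring
  by_cases hDn : D.Nonempty
  swap
  · rw [Finset.not_nonempty_iff_eq_empty] at hDn
    subst hDn
    simp
  obtain ⟨y0, hy0⟩ := hDn
  have hκ0 : ∀ E, 0 ≤ κa E := fun E => le_trans (by positivity) (ha1 E y0 hy0)
  have hfn : ∀ J, 0 ≤ f J := by
    intro J
    have := hf0 (Finset.univ \ J) (le_trans (mul_nonneg (hκ0 _) (by positivity)) (ha2 _))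
    rwa [Finset.sdiff_sdiff_eq_self (Finset.subset_univ J)] at this
  calc _ ≤ ∑ m : (∀ i, Fin (M i)), ∑ m' : (∀ i, Fin (M i)),
        f (Finset.univ.filter (fun i => m i ≠ m' i)) :=
        Finset.sum_le_sum fun m _ => Finset.sum_le_sum fun m' _ => step2 m m'
    _ ≤ ∑ m : (∀ i, Fin (M i)), ∑ J : Finset ι, (∏ i ∈ J, (M i : ℝ)) * f J := by
        apply Finset.sum_le_sum; intro m _
        rw [← Finset.sum_fiberwise Finset.univ
          (fun m' : (∀ i, Fin (M i)) => Finset.univ.filter (fun i => m i ≠ m' i))]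
        apply Finset.sum_le_sum; intro J _
        rw [Finset.sum_congr rfl (g := fun _ => f J)]
        · rw [Finset.sum_const, nsmul_eq_mul]
          exact mul_le_mul_of_nonneg_right (step3 m J) (hfn J)
        · intro m' hm'
          simp only [Finset.mem_filter, Finset.mem_univ, true_and] at hm'
          rw [hm']
    _ = ∑ m : (∀ i, Fin (M i)), ∑ J : Finset ι,
          C * D.card ^ 2 * K * (∏ i, (M i : ℝ)) / (∏ i, q i) ^ 2 := by
        apply Finset.sum_congr rfl; intro m _
        apply Finset.sum_congr rfl; intro J _
        rw [← hprodsplit J (fun i => (M i : ℝ))]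
        simp only [f]
        ring
    _ = _ := by
        simp only [Finset.sum_const, nsmul_eq_mul, Finset.card_univ, Fintype.card_finset,
          Fintype.card_pi, Fintype.card_fin]
        push_cast
        ring

lemma sum_bad_bound (hY : ∀ i, Nonempty (Y i))
    (D : Finset (∀ i, Y i))
    {Δ : Type} [Fintype Δ] (B : Δ → Finset ι) (cs : Δ → ι → ℕ) (hcs : ∀ d i, 1 ≤ cs d i)
    (P : Δ → Finset (∀ i, Y i))
    (hP : ∀ d y y', y ∈ P d → (∀ i ∈ B d, y' i = y i) → y' ∈ P d)
    (κb : Δ → Finset ι → ℝ)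
    (hb1 : ∀ d, ∀ J ⊆ B d, J.Nonempty → ∀ y ∈ D,
      (((P d).filter (fun y' => ∀ i, i ∉ J → y' i = y i)).card : ℝ) ≤ κb d J)
    (hb0 : ∀ d J, 0 ≤ κb d J)
    (hb2 : ∀ d, ∀ J ⊆ B d, J.Nonempty → κb d J * (∏ j ∈ J, ((cs d j : ℝ) - 1)) *
      (2 * Fintype.card Δ * 2 ^ Fintype.card ι) ≤ ∏ j ∈ J, (Fintype.card (Y j) : ℝ)) 
    (m : ∀ i, Fin (M i)) [DecidablePred (GoodIdx D B cs P · m)] :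
    2 * ((Finset.univ.filter (fun c : (∀ i, Fin (M i) → Y i) => (fun i => c i (m i)) ∈ D ∧
      ¬ GoodIdx D B cs P c m)).card : ℝ)
    ≤ (Fintype.card (∀ i, Fin (M i) → Y i) : ℝ) * D.card / ∏ i, (Fintype.card (Y i) : ℝ) := by
  classical
  set C : ℝ := (Fintype.card (∀ i, Fin (M i) → Y i) : ℝ) with hC
  set q : ι → ℝ := fun i => (Fintype.card (Y i) : ℝ) with hq
  have hqpos : ∀ i, 0 < q i := fun i => by
    have := Fintype.card_pos_iff.mpr (hY i)
    simp only [hq]; positivity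
  have hqq : 0 < ∏ i, q i := Finset.prod_pos fun i _ => hqpos i
  let A : Δ → Finset ι → Finset (∀ i, Fin (M i)) := fun d J =>
    Fintype.piFinset (fun i => if i ∈ J then
      Finset.univ.filter (fun z : Fin (M i) => (z : ℕ) / cs d i = m i / cs d i ∧ z ≠ m i)
      else {m i})
  have hA : ∀ d J, ((A d J).card : ℝ) ≤ ∏ j ∈ J, ((cs d j : ℝ) - 1) := by
    intro d J
    simp only [A, Fintype.card_piFinset]
    push_cast
    rw [← Finset.prod_subset (Finset.subset_univ J)]
    · apply Finset.prod_le_prod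
      · intros; positivity
      · intro i hi
        simp only [hi, if_true]
        exact card_bin _ (hcs d i) (m i)
    · intro i _ hi; simp [hi]
  have hAJ : ∀ d J, ∀ m' ∈ A d J, ∀ i, (m i = m' i ↔ i ∉ J) := by
    intro d J m' hm' i
    simp only [A, Fintype.mem_piFinset] at hm'
    have := hm' i
    split_ifs at this with hi
    · simp at this; simp [hi]; exact fun h => this.2 h.symm
    · simp at this; simp [hi, this]
  have hsub : (Finset.univ.filter (fun c : (∀ i, Fin (M i) → Y i) => (fun i => c i (m i)) ∈ D ∧
      ¬ GoodIdx D B cs P c m)) ⊆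
      Finset.univ.biUnion (fun d => ((B d).powerset.erase ∅).biUnion fun J =>
        (A d J).biUnion fun m' => Finset.univ.filter (fun c : (∀ i, Fin (M i) → Y i) =>
          (fun i => c i (m i)) ∈ D ∧ (fun i => c i (m' i)) ∈ P d)) := by
    intro c hc
    simp only [Finset.mem_filter, Finset.mem_univ, true_and, GoodIdx, not_and, not_forall] at hc
    obtain ⟨h1, h2⟩ := hc
    obtain ⟨d, m'', hbin, hPd, i0, hi0, hne⟩ := h2 h1
    let m' : ∀ i, Fin (M i) := fun i => if i ∈ B d then m'' i else m i
    let J := (B d).filter (fun i => m'' i ≠ m i)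
    simp only [Finset.mem_biUnion, Finset.mem_univ, true_and, Finset.mem_erase,
      Finset.mem_powerset, Finset.mem_filter]
    refine ⟨d, J, ⟨?_, Finset.filter_subset _ _⟩, m', ?_, h1, ?_⟩
    · apply Finset.Nonempty.ne_empty
      exact ⟨i0, by simp [J, hi0, hne]⟩
    · simp only [A, Fintype.mem_piFinset]
      intro i
      by_cases hi : i ∈ B d
      · by_cases hi2 : m'' i = m i
        · simp [J, m', hi2]
        · simp [J, m', hi, hi2, hbin i hi]
      · simp [J, m', hi]
    · refine hP d _ _ hPd ?_
      intro i hi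
      simp [m', hi]
  have hΔ : ((Finset.univ.filter (fun c : (∀ i, Fin (M i) → Y i) => (fun i => c i (m i)) ∈ D ∧
      ¬ GoodIdx D B cs P c m)).card : ℝ) ≤
      ∑ d : Δ, ∑ J ∈ (B d).powerset.erase ∅, ∑ m' ∈ A d J,
        C * D.card * κb d J / ((∏ i, q i) * ∏ i ∈ J, q i) := by
    calc _ ≤ ((Finset.univ.biUnion (fun d => ((B d).powerset.erase ∅).biUnion fun J =>
        (A d J).biUnion fun m' => Finset.univ.filter (fun c : (∀ i, Fin (M i) → Y i) =>
          (fun i => c i (m i)) ∈ D ∧ (fun i => c i (m' i)) ∈ P d))).card : ℝ) := by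
          exact_mod_cast Finset.card_le_card hsub
      _ ≤ ∑ d : Δ, ((((B d).powerset.erase ∅).biUnion fun J =>
        (A d J).biUnion fun m' => Finset.univ.filter (fun c : (∀ i, Fin (M i) → Y i) =>
          (fun i => c i (m i)) ∈ D ∧ (fun i => c i (m' i)) ∈ P d)).card : ℝ) := by
          exact_mod_cast Finset.card_biUnion_le
      _ ≤ ∑ d : Δ, ∑ J ∈ (B d).powerset.erase ∅, (((A d J).biUnion fun m' =>
          Finset.univ.filter (fun c : (∀ i, Fin (M i) → Y i) =>
          (fun i => c i (m i)) ∈ D ∧ (fun i => c i (m' i)) ∈ P d)).card : ℝ) := by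
          apply Finset.sum_le_sum; intro d _
          exact_mod_cast Finset.card_biUnion_le
      _ ≤ ∑ d : Δ, ∑ J ∈ (B d).powerset.erase ∅, ∑ m' ∈ A d J,
          ((Finset.univ.filter (fun c : (∀ i, Fin (M i) → Y i) =>
          (fun i => c i (m i)) ∈ D ∧ (fun i => c i (m' i)) ∈ P d)).card : ℝ) := by
          apply Finset.sum_le_sum; intro d _
          apply Finset.sum_le_sum; intro J _
          exact_mod_cast Finset.card_biUnion_le
      _ ≤ _ := by
          apply Finset.sum_le_sum; intro d _
          apply Finset.sum_le_sum; intro J hJ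
          apply Finset.sum_le_sum; intro m' hm'
          simp only [Finset.mem_erase, Finset.mem_powerset] at hJ
          have h := count_pair hY m m' D (P d) (κb d J) (by
            intro y hy
            refine le_trans (le_of_eq ?_)
              (hb1 d J hJ.2 (Finset.nonempty_iff_ne_empty.mpr hJ.1) y hy)
            congr 2
            ext y'
            simp only [hAJ d J m' hm'])
          have hJe : (Finset.univ.filter (fun i => m i ≠ m' i)) = J := by
            ext i
            simp [hAJ d J m' hm' i]
          rw [hJe] at h
          exact h
  set R : ℝ := 2 * Fintype.card Δ * 2 ^ Fintype.card ι with hR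
  rcases isEmpty_or_nonempty Δ with hE | hE
  · rw [Finset.univ_eq_empty (α := Δ), Finset.sum_empty] at hΔ
    have : (0:ℝ) ≤ C * D.card / ∏ i, q i := by positivity
    linarith
  have hΔpos : 0 < (Fintype.card Δ : ℝ) := by
    have := Fintype.card_pos_iff.mpr hE
    positivity
  have hRpos : 0 < R := by positivity
  have hterm : ∀ d, ∀ J ∈ (B d).powerset.erase ∅, ∑ m' ∈ A d J,
        C * D.card * κb d J / ((∏ i, q i) * ∏ i ∈ J, q i) ≤ C * D.card / (∏ i, q i) / R := by
    intro d J hJ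
    simp only [Finset.mem_erase, Finset.mem_powerset] at hJ
    have h2 := hb2 d J hJ.2 (Finset.nonempty_iff_ne_empty.mpr hJ.1)
    have hJpos : 0 < ∏ i ∈ J, q i := Finset.prod_pos fun i _ => hqpos i
    rw [Finset.sum_const, nsmul_eq_mul]
    have h3 : ((A d J).card : ℝ) * κb d J * R ≤ ∏ i ∈ J, q i := by
      refine le_trans ?_ h2
      apply mul_le_mul_of_nonneg_right _ hRpos.le
      rw [mul_comm]
      exact mul_le_mul_of_nonneg_left (hA d J) (hb0 d J)
    rw [div_div, mul_div_assoc', div_le_div_iff₀ (by positivity) (by positivity)]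
    calc ((A d J).card : ℝ) * (C * D.card * κb d J) * ((∏ i, q i) * R)
        = C * D.card * (∏ i, q i) * ((A d J).card * κb d J * R) := by ring
      _ ≤ C * D.card * (∏ i, q i) * (∏ i ∈ J, q i) := by
          apply mul_le_mul_of_nonneg_left h3; positivity
      _ = _ := by ring
  have hfin : ∑ d : Δ, ∑ J ∈ (B d).powerset.erase ∅, ∑ m' ∈ A d J,
        C * D.card * κb d J / ((∏ i, q i) * ∏ i ∈ J, q i)
      ≤ ∑ d : Δ, (2 ^ Fintype.card ι : ℝ) * (C * D.card / (∏ i, q i) / R) := by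
    apply Finset.sum_le_sum; intro d _
    refine (Finset.sum_le_sum (hterm d)).trans ?_
    rw [Finset.sum_const, nsmul_eq_mul]
    apply mul_le_mul_of_nonneg_right _ (by positivity)
    have h1 : ((B d).powerset.erase ∅).card ≤ Fintype.card (Finset ι) := Finset.card_le_univ _
    rw [Fintype.card_finset] at h1
    exact_mod_cast h1
  rw [Finset.sum_const, nsmul_eq_mul, Finset.card_univ] at hfin
  have h4 : (Fintype.card Δ : ℝ) * ((2 ^ Fintype.card ι : ℝ) * (C * D.card / (∏ i, q i) / R))
      = (C * D.card / (∏ i, q i)) / 2 := by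
    rw [hR]; field_simp
  linarith

/-- One-shot random coding lemma: a non-negligible fraction of codebooks is good. -/
lemma oneshot (hY : ∀ i, Nonempty (Y i)) (hM : ∀ i, 0 < M i)
    (D : Finset (∀ i, Y i)) (hD : D.Nonempty) (K : ℝ)
    (κa : Finset ι → ℝ)
    (ha1 : ∀ E : Finset ι, ∀ y ∈ D, ((D.filter (fun y' => ∀ i ∈ E, y' i = y i)).card : ℝ) ≤ κa E)
    (ha2 : ∀ E : Finset ι, κa E * ∏ i ∈ E, (Fintype.card (Y i) : ℝ)
      ≤ K * D.card * ∏ i ∈ E, (M i : ℝ))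
    {Δ : Type} [Fintype Δ] (B : Δ → Finset ι) (cs : Δ → ι → ℕ) (hcs : ∀ d i, 1 ≤ cs d i)
    (P : Δ → Finset (∀ i, Y i))
    (hP : ∀ d y y', y ∈ P d → (∀ i ∈ B d, y' i = y i) → y' ∈ P d)
    (κb : Δ → Finset ι → ℝ)
    (hb1 : ∀ d, ∀ J ⊆ B d, J.Nonempty → ∀ y ∈ D,
      (((P d).filter (fun y' => ∀ i, i ∉ J → y' i = y i)).card : ℝ) ≤ κb d J)
    (hb0 : ∀ d J, 0 ≤ κb d J)
    (hb2 : ∀ d, ∀ J ⊆ B d, J.Nonempty → κb d J * (∏ j ∈ J, ((cs d j : ℝ) - 1)) *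
      (2 * Fintype.card Δ * 2 ^ Fintype.card ι) ≤ ∏ j ∈ J, (Fintype.card (Y j) : ℝ))
    [DecidablePred (fun c : ∀ i, Fin (M i) → Y i => ∃ m, GoodIdx D B cs P c m)] :
    (Fintype.card (∀ i, Fin (M i) → Y i) : ℝ) ≤ 4 * 2 ^ Fintype.card ι * K *
      ((Finset.univ.filter (fun c : ∀ i, Fin (M i) → Y i => ∃ m, GoodIdx D B cs P c m)).card : ℝ) := by
  classical
  set C : ℝ := (Fintype.card (∀ i, Fin (M i) → Y i) : ℝ) with hC
  have hCpos : 0 < C := by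
    have : 0 < Fintype.card (∀ i, Fin (M i) → Y i) := Fintype.card_pos_iff.mpr
      ⟨fun i _ => (hY i).some⟩
    positivity
  set q : ι → ℝ := fun i => (Fintype.card (Y i) : ℝ) with hq
  have hqpos : ∀ i, 0 < q i := fun i => by
    have := Fintype.card_pos_iff.mpr (hY i)
    simp only [hq]; positivity
  have hqq : 0 < ∏ i, q i := Finset.prod_pos fun i _ => hqpos i
  have hMM : 0 < ∏ i, (M i : ℝ) := Finset.prod_pos fun i _ => by exact_mod_cast hM i
  have hDpos : 0 < (D.card : ℝ) := by exact_mod_cast hD.card_pos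
  let N : (∀ i, Fin (M i) → Y i) → ℝ := fun c =>
    ((Finset.univ.filter (fun m : ∀ i, Fin (M i) => (fun i => c i (m i)) ∈ D)).card : ℝ)
  let Nb : (∀ i, Fin (M i) → Y i) → ℝ := fun c =>
    ((Finset.univ.filter (fun m : ∀ i, Fin (M i) => (fun i => c i (m i)) ∈ D ∧
      ¬ GoodIdx D B cs P c m)).card : ℝ)
  let Ng : (∀ i, Fin (M i) → Y i) → ℝ := fun c =>
    ((Finset.univ.filter (fun m : ∀ i, Fin (M i) => GoodIdx D B cs P c m)).card : ℝ)
  have hN : ∀ c, N c = Ng c + Nb c := by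
    intro c
    simp only [N, Ng, Nb]
    norm_cast
    rw [← Finset.card_union_of_disjoint]
    · congr 1
      ext m
      simp only [Finset.mem_filter, Finset.mem_univ, true_and, Finset.mem_union]
      constructor
      · intro h; tauto
      · rintro (h | h)
        · exact h.1
        · exact h.1
    · rw [Finset.disjoint_filter]
      intro m _ h1 h2
      exact h2.2 h1
  set S : ℝ := (∏ i, (M i : ℝ)) * (C * D.card / ∏ i, q i) with hS
  have hSpos : 0 < S := by positivity
  have hsumN : ∑ c, N c = S := by
    simp only [N]
    rw [dc, Finset.sum_congr rfl (fun m _ => count_single hY m D), Finset.sum_const, nsmul_eq_mul,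
      Finset.card_univ, Fintype.card_pi]
    simp [hS, hC, hq]
  have hsumNb : 2 * ∑ c, Nb c ≤ S := by
    simp only [Nb]
    rw [dc, Finset.mul_sum]
    refine (Finset.sum_le_sum (fun m _ =>
      sum_bad_bound hY D B cs hcs P hP κb hb1 hb0 hb2 m)).trans ?_
    rw [Finset.sum_const, nsmul_eq_mul, Finset.card_univ, Fintype.card_pi]
    simp [hS, hC, hq]
  have hsq : ∑ c, N c ^ 2 ≤ 2 ^ Fintype.card ι * K * (S ^ 2 / C) := by
    refine (sum_sq_bound hY D K κa ha1 ha2).trans (le_of_eq ?_)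
    rw [hS]
    change 2 ^ Fintype.card ι * K * ((∏ i, (M i : ℝ)) ^ 2 * C * D.card ^ 2 / (∏ i, q i) ^ 2) = _
    field_simp
  have hsumNg : S / 2 ≤ ∑ c, Ng c := by
    have : ∑ c, N c = ∑ c, Ng c + ∑ c, Nb c := by
      rw [← Finset.sum_add_distrib]; exact Finset.sum_congr rfl fun c _ => hN c
    linarith
  set G := (Finset.univ.filter (fun c : ∀ i, Fin (M i) → Y i => ∃ m, GoodIdx D B cs P c m)) with hG
  have hrest : ∑ c, Ng c = ∑ c ∈ G, Ng c * 1 := by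
    simp only [mul_one]
    symm
    apply Finset.sum_subset (Finset.subset_univ _)
    intro c _ hc
    simp only [hG, Finset.mem_filter, Finset.mem_univ, true_and, not_exists] at hc
    simp only [Ng]
    norm_cast
    rw [Finset.card_eq_zero, Finset.filter_eq_empty_iff]
    intro m _
    exact hc m
  have hcs2 := Finset.sum_mul_sq_le_sq_mul_sq G Ng (fun _ => 1)
  rw [← hrest] at hcs2
  simp only [one_pow, Finset.sum_const, nsmul_eq_mul, mul_one] at hcs2
  have hNgsq : ∑ c ∈ G, Ng c ^ 2 ≤ ∑ c, N c ^ 2 := by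
    calc _ ≤ ∑ c, Ng c ^ 2 := Finset.sum_le_sum_of_subset_of_nonneg (Finset.subset_univ _)
            (fun _ _ _ => by positivity)
      _ ≤ _ := by
        apply Finset.sum_le_sum; intro c _
        have h0 : 0 ≤ Ng c := by simp only [Ng]; positivity
        have h1 : 0 ≤ Nb c := by simp only [Nb]; positivity
        have := hN c
        nlinarith
  have h1 : (S / 2) ^ 2 ≤ (∑ c, Ng c) ^ 2 := by
    apply pow_le_pow_left₀ (by positivity) hsumNg
  have h2 : (S / 2) ^ 2 ≤ 2 ^ Fintype.card ι * K * (S ^ 2 / C) * G.card := by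
    refine h1.trans (hcs2.trans ?_)
    exact mul_le_mul_of_nonneg_right (hNgsq.trans hsq) (by positivity)
  have h3 : S ^ 2 * C ≤ S ^ 2 * (4 * 2 ^ Fintype.card ι * K * G.card) := by
    have := mul_le_mul_of_nonneg_right h2 (by positivity : 0 ≤ 4 * C)
    have e : 2 ^ Fintype.card ι * K * (S ^ 2 / C) * G.card * (4 * C)
      = S ^ 2 * (4 * 2 ^ Fintype.card ι * K * G.card) := by field_simp
    rw [e] at this
    linarith
  exact le_of_mul_le_mul_left h3 (by positivity)
end oneshot

open scoped Classical in
/-- The type class of the sequence `F ∘ s`: all its rearrangements. -/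
noncomputable def tcl {I Ω A : Type} [Fintype I] [Fintype A] (s : I → Ω) (F : Ω → A) :
    Finset (I → A) :=
  Finset.univ.filter (fun f => ∃ σ : Equiv.Perm I, f = fun j => F (s (σ j)))

section tcl
variable {I Ω A A' : Type} [Fintype I] [Fintype A] [Fintype A'] (s : I → Ω)

lemma mem_tcl (F : Ω → A) (f : I → A) :
    f ∈ tcl s F ↔ ∃ σ : Equiv.Perm I, f = fun j => F (s (σ j)) := by
  simp [tcl]

lemma self_mem_tcl (F : Ω → A) : (fun j => F (s j)) ∈ tcl s F :=
  (mem_tcl s F _).2 ⟨1, rfl⟩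

lemma tcl_pos (F : Ω → A) : 0 < (tcl s F).card := Finset.card_pos.2 ⟨_, self_mem_tcl s F⟩

lemma tcl_map (F : Ω → A) (π : A → A') {f : I → A} (hf : f ∈ tcl s F) :
    (fun j => π (f j)) ∈ tcl s (fun ω => π (F ω)) := by
  obtain ⟨σ, rfl⟩ := (mem_tcl s F _).1 hf
  exact (mem_tcl s _ _).2 ⟨σ, rfl⟩

lemma tcl_perm (F : Ω → A) (τ : Equiv.Perm I) {f : I → A} (hf : f ∈ tcl s F) :
    (fun j => f (τ j)) ∈ tcl s F := by
  obtain ⟨σ, rfl⟩ := (mem_tcl s F _).1 hf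
  exact (mem_tcl s _ _).2 ⟨τ.trans σ, rfl⟩

open scoped Classical in
lemma tcl_fiber (F : Ω → A) (π : A → A') (G : Ω → A') (hG : G = fun ω => π (F ω)) {y : I → A'}
    (hy : y ∈ tcl s G) :
    ((tcl s F).filter (fun f => (fun j => π (f j)) = y)).card * (tcl s G).card = (tcl s F).card := by
  subst hG
  have h1 : ∀ y' ∈ tcl s (fun ω => π (F ω)),
      ((tcl s F).filter (fun f => (fun j => π (f j)) = y')).card
      = ((tcl s F).filter (fun f => (fun j => π (f j)) = y)).card := by
    intro y' hy'
    obtain ⟨σ, rfl⟩ := (mem_tcl s _ _).1 hy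
    obtain ⟨σ', rfl⟩ := (mem_tcl s _ _).1 hy'
    apply Finset.card_bij' (fun f _ => fun j => f (σ'.symm (σ j)))
      (fun f _ => fun j => f (σ.symm (σ' j)))
    · intro f hf
      simp only [Finset.mem_filter] at hf ⊢
      refine ⟨tcl_perm s F (σ.trans σ'.symm) hf.1, ?_⟩
      funext j
      have := congrFun hf.2 (σ'.symm (σ j))
      simpa using this
    · intro f hf
      simp only [Finset.mem_filter] at hf ⊢
      refine ⟨tcl_perm s F (σ'.trans σ.symm) hf.1, ?_⟩
      funext j
      have := congrFun hf.2 (σ.symm (σ' j))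
      simpa using this
    · intro f hf; funext j; simp
    · intro f hf; funext j; simp
  rw [Finset.card_eq_sum_card_fiberwise (f := fun f : I → A => fun j => π (f j))
    (t := tcl s (fun ω => π (F ω))) (s := tcl s F) (fun f hf => tcl_map s F π hf)]
  rw [Finset.sum_congr rfl h1, Finset.sum_const, smul_eq_mul, mul_comm]

lemma tcl_card [DecidableEq I] [DecidableEq A] (F : Ω → A) :
    (tcl s F).card * ∏ a, (Finset.univ.filter (fun j => F (s j) = a)).card.factorial
      = (Fintype.card I).factorial := by
  classical
  let T : Type := {f // f ∈ tcl s F}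
  have hsum : (Fintype.card I).factorial = ∑ f ∈ tcl s F,
      (Finset.univ.filter (fun σ : Equiv.Perm I => (fun j => F (s (σ j))) = f)).card := by
    rw [← Fintype.card_perm, ← Finset.card_univ]
    exact Finset.card_eq_sum_card_fiberwise
      (f := fun σ : Equiv.Perm I => fun j => F (s (σ j))) (t := tcl s F)
      (fun σ _ => (mem_tcl s F _).2 ⟨σ, rfl⟩)
  rw [hsum, Finset.sum_const_nat (m := ∏ a, (Finset.univ.filter (fun j => F (s j) = a)).card.factorial)]
  intro f hf
  obtain ⟨τ, rfl⟩ := (mem_tcl s F _).1 hf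
  have h2 := DomMulAct.stabilizer_card (fun j => F (s j))
  simp only [Fintype.card_subtype] at h2
  rw [← h2]
  apply Finset.card_bij' (fun σ _ => τ.symm.trans σ)  (fun σ _ => τ.trans σ)
  · intro σ hσ
    simp only [Finset.mem_filter, Finset.mem_univ, true_and] at hσ ⊢
    funext j
    have := congrFun hσ (τ.symm j)
    simpa using this
  · intro σ hσ
    simp only [Finset.mem_filter, Finset.mem_univ, true_and] at hσ ⊢
    funext j
    have := congrFun hσ (τ j)
    simpa using this
  · intro σ _; ext; simp
  · intro σ _; ext; simp

end tcl

section types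
variable {I Ω γ 𝒱 ι : Type} [Fintype I] [Fintype γ] [Fintype 𝒱] [Fintype ι] [DecidableEq ι]

open scoped Classical in
/-- tuples of codewords jointly typical with `v` -/
noncomputable def DSet (s : I → Ω) (X : ι → Ω → γ) (V : Ω → 𝒱) (v : I → 𝒱) :
    Finset (∀ i, {f // f ∈ tcl s (X i)}) :=
  Finset.univ.filter (fun y => (fun j => ((fun i => (y i).1 j), v j)) ∈
    tcl s (fun ω => ((fun i => X i ω), V ω)))

open scoped Classical in
/-- tuples of codewords whose restriction to `B` is jointly typical -/
noncomputable def PSet (s : I → Ω) (X : ι → Ω → γ) (B : Finset ι) :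
    Finset (∀ i, {f // f ∈ tcl s (X i)}) :=
  Finset.univ.filter (fun y => (fun j => fun i : {i // i ∈ B} => (y i.1).1 j) ∈
    tcl s (fun ω => fun i : {i // i ∈ B} => X i.1 ω))

lemma real_aux {TV TXV D K Pq PM TE : ℝ} (h1 : TV * Pq ≤ K * TE * PM) (hD : TXV ≤ D * TV)
    (h2 : 0 < TV) (h3 : 0 < TXV) (h4 : 0 ≤ Pq) : TXV * Pq ≤ K * D * PM * TE := by
  have hK : 0 ≤ K * TE * PM := le_trans (by positivity) h1
  have h4 := mul_le_mul_of_nonneg_right hD hK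
  have h5 := mul_le_mul_of_nonneg_left h1 h3.le
  have h6 : TV * (TXV * Pq) ≤ TV * (K * D * PM * TE) := by
    linarith
  exact le_of_mul_le_mul_left h6 h2

set_option maxHeartbeats 1600000 in
open scoped Classical in
lemma types_oneshot (s : I → Ω) (X : ι → Ω → γ) (V : Ω → 𝒱) (M : ι → ℕ) (hM : ∀ i, 0 < M i)
    {Δ : Type} [Fintype Δ] (B : Δ → Finset ι) (cs : Δ → ι → ℕ) (hcs : ∀ d i, 1 ≤ cs d i) (K : ℝ)
    (ha : ∀ E : Finset ι, ((tcl s V).card : ℝ) * ∏ i ∈ E, ((tcl s (X i)).card : ℝ) ≤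
      K * (tcl s (fun ω => ((fun i : {i // i ∈ E} => X i.1 ω), V ω))).card * ∏ i ∈ E, (M i : ℝ))
    (hb : ∀ d, ∀ J ⊆ B d, J.Nonempty →
      ((tcl s (fun ω => fun i : {i // i ∈ B d} => X i.1 ω)).card : ℝ) *
        (∏ j ∈ J, ((cs d j : ℝ) - 1)) * (2 * Fintype.card Δ * 2 ^ Fintype.card ι) ≤
      (tcl s (fun ω => fun i : {i // i ∈ B d \ J} => X i.1 ω)).card *
        ∏ j ∈ J, ((tcl s (X j)).card : ℝ))
    (v : I → 𝒱) (hv : v ∈ tcl s V) :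
    (Fintype.card (∀ i, Fin (M i) → {f // f ∈ tcl s (X i)}) : ℝ) ≤ 4 * 2 ^ Fintype.card ι * K *
      ((Finset.univ.filter (fun c : ∀ i, Fin (M i) → {f // f ∈ tcl s (X i)} =>
        ∃ m, GoodIdx (DSet s X V v) B cs (fun d => PSet s X (B d)) c m)).card : ℝ) := by
  set XV : Ω → (ι → γ) × 𝒱 := fun ω => ((fun i => X i ω), V ω) with hXV
  have hpos : ∀ {A : Type} [Fintype A] (F : Ω → A), (0:ℝ) < (tcl s F).card := by
    intro A _ F; exact_mod_cast tcl_pos s F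
  -- size of the conditional type class
  have hDlow : ((tcl s XV).card : ℝ) ≤ (DSet s X V v).card * (tcl s V).card := by
    have h := tcl_fiber s XV Prod.snd V rfl hv
    rw [← h]
    push_cast
    apply mul_le_mul_of_nonneg_right _ (hpos V).le
    norm_cast
    apply Finset.card_le_card_of_surjOn
      (fun (y : ∀ i, {f // f ∈ tcl s (X i)}) => fun j => ((fun i => (y i).1 j), v j))
    intro f hf
    simp only [Finset.coe_filter, Set.mem_ofPred_eq] at hf
    have hfe : (fun j => ((fun i => (f j).1 i), v j)) = f := by
      funext j
      rw [← hf.2]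
    refine ⟨fun i => ⟨fun j => (f j).1 i, tcl_map s XV (fun x => x.1 i) hf.1⟩, ?_, hfe⟩
    simp only [DSet, Finset.coe_filter, Set.mem_ofPred_eq, Finset.mem_univ, true_and]
    rw [hfe]
    exact hf.1
  have hDcard : 0 < ((DSet s X V v).card : ℝ) := by
    exact pos_of_mul_pos_left (lt_of_lt_of_le (hpos XV) hDlow) (Nat.cast_nonneg _)
  refine oneshot (fun i => ⟨⟨_, self_mem_tcl s (X i)⟩⟩) hM (DSet s X V v)
    (Finset.card_pos.1 (by exact_mod_cast hDcard)) K
    (fun E => ((tcl s XV).card : ℝ) /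
      (tcl s (fun ω => ((fun i : {i // i ∈ E} => X i.1 ω), V ω))).card)
    ?_ ?_ B cs hcs _ ?_
    (fun d J => ((tcl s (fun ω => fun i : {i // i ∈ B d} => X i.1 ω)).card : ℝ) /
      (tcl s (fun ω => fun i : {i // i ∈ B d \ J} => X i.1 ω)).card) ?_ ?_ ?_
  · intro E y hy
    simp only [DSet, Finset.mem_filter, Finset.mem_univ, true_and] at hy
    let π : (ι → γ) × 𝒱 → ({i // i ∈ E} → γ) × 𝒱 := fun x => ((fun i => x.1 i.1), x.2)
    have h := tcl_fiber s XV π (fun ω => ((fun i : {i // i ∈ E} => X i.1 ω), V ω)) rfl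
      (tcl_map s XV π hy)
    rw [le_div_iff₀ (hpos _)]
    rw [← h]
    push_cast
    apply mul_le_mul_of_nonneg_right _ (hpos _).le
    norm_cast
    apply Finset.card_le_card_of_injOn
      (fun (y : ∀ i, {f // f ∈ tcl s (X i)}) => fun j => ((fun i => (y i).1 j), v j))
    · intro y' hy'
      simp only [Finset.coe_filter, Set.mem_ofPred_eq, DSet, Finset.mem_filter, Finset.mem_univ,
        true_and] at hy' ⊢
      refine ⟨hy'.1, ?_⟩
      funext j
      simp only [π, Prod.mk.injEq, and_true]
      funext i
      rw [hy'.2 i.1 i.2]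
    · intro y1 _ y2 _ h12
      funext i
      apply Subtype.ext
      funext j
      exact congrFun (congrArg Prod.fst (congrFun h12 j)) i
  · intro E
    simp only [Fintype.card_coe]
    rw [div_mul_eq_mul_div, div_le_iff₀ (hpos _)]
    exact real_aux (ha E) hDlow (hpos V) (hpos XV)
      (Finset.prod_nonneg fun i _ => Nat.cast_nonneg _)
  · intro d y y' hy h
    simp only [PSet, Finset.mem_filter, Finset.mem_univ, true_and] at hy ⊢
    convert hy using 3 with j i
    rw [h i.1 i.2]
  · intro d J hJ _ y hy
    simp only [DSet, Finset.mem_filter, Finset.mem_univ, true_and] at hy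
    let π : ({i // i ∈ B d} → γ) → ({i // i ∈ B d \ J} → γ) :=
      fun x i => x ⟨i.1, (Finset.mem_sdiff.1 i.2).1⟩
    have hy2 : (fun j => fun i : {i // i ∈ B d} => (y i.1).1 j) ∈
      tcl s (fun ω => fun i : {i // i ∈ B d} => X i.1 ω) :=
      tcl_map s XV (fun x => fun i : {i // i ∈ B d} => x.1 i.1) hy
    have h := tcl_fiber s (fun ω => fun i : {i // i ∈ B d} => X i.1 ω) π
      (fun ω => fun i : {i // i ∈ B d \ J} => X i.1 ω) rfl (tcl_map s _ π hy2)
    rw [le_div_iff₀ (hpos _)]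
    rw [← h]
    push_cast
    apply mul_le_mul_of_nonneg_right _ (hpos _).le
    norm_cast
    apply Finset.card_le_card_of_injOn
      (fun (y : ∀ i, {f // f ∈ tcl s (X i)}) => fun j => fun i : {i // i ∈ B d} => (y i.1).1 j)
    · intro y' hy'
      simp only [Finset.coe_filter, Set.mem_ofPred_eq, PSet, Finset.mem_filter, Finset.mem_univ,
        true_and] at hy' ⊢
      refine ⟨hy'.1, ?_⟩
      funext j i
      simp only [π]
      rw [hy'.2 i.1 (Finset.mem_sdiff.1 i.2).2]
    · intro y1 h1 y2 h2 h12
      simp only [Finset.coe_filter, Set.mem_ofPred_eq] at h1 h2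
      funext i
      by_cases hi : i ∈ B d
      · apply Subtype.ext
        funext j
        exact congrFun (congrFun h12 j) ⟨i, hi⟩
      · have : i ∉ J := fun h => hi (hJ h)
        rw [h1.2 i this, h2.2 i this]
  · intro d J; exact div_nonneg (Nat.cast_nonneg _) (Nat.cast_nonneg _)
  · intro d J hJ hJn
    simp only [Fintype.card_coe]
    have h := hb d J hJ hJn
    rw [div_mul_eq_mul_div, div_mul_eq_mul_div, div_le_iff₀ (hpos _)]
    rw [mul_comm (∏ j ∈ J, _)]
    exact h
end types

open scoped Classical in
lemma cover_step {C W : Type} [Fintype C] [Fintype W] [Nonempty C] (R : C → W → Prop) (d : ℝ)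
    (h : ∀ w, d * Fintype.card C ≤ ((Finset.univ.filter (fun c => R c w)).card : ℝ))
    (U : Finset W) : ∃ c, ((U.filter (fun w => ¬ R c w)).card : ℝ) ≤ (1 - d) * U.card := by
  have hC : (0:ℝ) < Fintype.card C := by exact_mod_cast Fintype.card_pos
  have hsum : ∑ c : C, ((U.filter (fun w => ¬ R c w)).card : ℝ) ≤ ∑ c : C, (1 - d) * (U.card : ℝ) := by
    have h1 : ∑ c : C, ((U.filter (fun w => ¬ R c w)).card : ℝ)
        = ∑ w ∈ U, ((Finset.univ.filter (fun c => ¬ R c w)).card : ℝ) := by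
      simp only [Finset.card_filter]
      push_cast
      exact Finset.sum_comm
    rw [h1]
    calc _ ≤ ∑ w ∈ U, (1 - d) * (Fintype.card C : ℝ) := by
          apply Finset.sum_le_sum; intro w _
          have h2 : (Finset.univ.filter (fun c => R c w)).card +
              (Finset.univ.filter (fun c => ¬ R c w)).card = Fintype.card C := by
            rw [Finset.card_filter_add_card_filter_not, Finset.card_univ]
          have h3 : ((Finset.univ.filter (fun c => R c w)).card : ℝ) +
              (Finset.univ.filter (fun c => ¬ R c w)).card = Fintype.card C := by
            exact_mod_cast h2
          have := h w
          linarith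
      _ = _ := by simp; ring
  obtain ⟨c, _, hc⟩ := Finset.exists_le_of_sum_le Finset.univ_nonempty hsum
  exact ⟨c, hc⟩

open scoped Classical in
lemma cover {C W : Type} [Fintype C] [Fintype W] [Nonempty C] (R : C → W → Prop) (d : ℝ)
    (hd : d ≤ 1)
    (h : ∀ w, d * Fintype.card C ≤ ((Finset.univ.filter (fun c => R c w)).card : ℝ)) (K : ℕ) :
    ∃ f : Fin K → C, ((Finset.univ.filter (fun w => ∀ k, ¬ R (f k) w)).card : ℝ)
      ≤ (1 - d) ^ K * Fintype.card W := by
  induction K with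
  | zero => exact ⟨Fin.elim0, by simp⟩
  | succ K ih =>
    obtain ⟨f, hf⟩ := ih
    obtain ⟨c, hc⟩ := cover_step R d h (Finset.univ.filter (fun w => ∀ k, ¬ R (f k) w))
    refine ⟨Fin.cons c f, ?_⟩
    have : (Finset.univ.filter (fun w => ∀ k, ¬ R ((Fin.cons c f : Fin (K+1) → C) k) w))
      = (Finset.univ.filter (fun w => ∀ k, ¬ R (f k) w)).filter (fun w => ¬ R c w) := by
      ext w
      simp [Fin.forall_fin_succ, and_comm]
    rw [this]
    refine hc.trans ?_
    rw [pow_succ]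
    have := mul_le_mul_of_nonneg_left hf (by linarith : 0 ≤ 1 - d)
    linarith

open scoped Classical in
lemma cover' {C W : Type} [Fintype C] [Fintype W] [Nonempty C] (R : C → W → Prop) (d : ℝ)
    (hd : d ≤ 1)
    (h : ∀ w, d * Fintype.card C ≤ ((Finset.univ.filter (fun c => R c w)).card : ℝ)) (K : ℕ)
    (hK : Real.log (Fintype.card W) < d * K) :
    ∃ f : Fin K → C, ∀ w, ∃ k, R (f k) w := by
  obtain ⟨f, hf⟩ := cover R d hd h K
  refine ⟨f, ?_⟩
  rcases isEmpty_or_nonempty W with hE | hE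
  · intro w; exact hE.elim w
  have hW : (0:ℝ) < Fintype.card W := by exact_mod_cast Fintype.card_pos
  have h1 : (1 - d) ^ K * Fintype.card W < 1 := by
    have h2 : (1 - d) ^ K ≤ Real.exp (-(d * K)) := by
      calc (1 - d) ^ K ≤ (Real.exp (-d)) ^ K :=
            pow_le_pow_left₀ (by linarith) (by have := Real.add_one_le_exp (-d); linarith) K
        _ = _ := by rw [← Real.exp_nat_mul]; ring_nf
    have h3 : (Fintype.card W : ℝ) < Real.exp (d * K) := by
      rw [← Real.log_lt_iff_lt_exp hW]; exact hK
    calc _ ≤ Real.exp (-(d * K)) * Fintype.card W := mul_le_mul_of_nonneg_right h2 hW.le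
      _ < Real.exp (-(d * K)) * Real.exp (d * K) := mul_lt_mul_of_pos_left h3 (Real.exp_pos _)
      _ = 1 := by rw [← Real.exp_add]; simp
  have h2 : (Finset.univ.filter (fun w => ∀ k, ¬ R (f k) w)).card = 0 := by
    have : ((Finset.univ.filter (fun w => ∀ k, ¬ R (f k) w)).card : ℝ) < 1 := lt_of_le_of_lt hf h1
    have : (Finset.univ.filter (fun w => ∀ k, ¬ R (f k) w)).card < 1 := by exact_mod_cast this
    omega
  rw [Finset.card_eq_zero, Finset.filter_eq_empty_iff] at h2
  intro w
  have := h2 (Finset.mem_univ w)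
  push Not at this
  exact this

lemma cov_arith (T W C K : ℝ) (hW : W ≠ 0) : T / (W * K) * (C * W) = T * (C / K) := by
  rcases eq_or_ne K 0 with h | h
  · simp [h]
  · field_simp

set_option maxHeartbeats 1000000 in
open scoped Classical in
lemma enc_exists {I Ω γ 𝒱 ι : Type} [Fintype I] [Fintype γ] [Fintype 𝒱] [AddCommGroup 𝒱]
    [Fintype ι] [DecidableEq ι]
    (s : I → Ω) (X : ι → Ω → γ) (V : Ω → 𝒱) (M : ι → ℕ) (hM : ∀ i, 0 < M i)
    {Δ : Type} [Fintype Δ] (B : Δ → Finset ι) (cs : Δ → ι → ℕ) (hcs : ∀ d i, 1 ≤ cs d i) (K : ℝ)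
    (ha : ∀ E : Finset ι, ((tcl s V).card : ℝ) * ∏ i ∈ E, ((tcl s (X i)).card : ℝ) ≤
      K * (tcl s (fun ω => ((fun i : {i // i ∈ E} => X i.1 ω), V ω))).card * ∏ i ∈ E, (M i : ℝ))
    (hb : ∀ d, ∀ J ⊆ B d, J.Nonempty →
      ((tcl s (fun ω => fun i : {i // i ∈ B d} => X i.1 ω)).card : ℝ) *
        (∏ j ∈ J, ((cs d j : ℝ) - 1)) * (2 * Fintype.card Δ * 2 ^ Fintype.card ι) ≤
      (tcl s (fun ω => fun i : {i // i ∈ B d \ J} => X i.1 ω)).card *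
        ∏ j ∈ J, ((tcl s (X j)).card : ℝ))
    (hK : 1 ≤ K) (Kc : ℕ)
    (hKc : Real.log (Fintype.card (I → 𝒱)) <
      (tcl s V).card / (Fintype.card (I → 𝒱) * (4 * 2 ^ Fintype.card ι * K)) * Kc) :
    ∃ (kk : (I → 𝒱) → Fin Kc) (m : (I → 𝒱) → ∀ i, Fin (M i)) (z : Fin Kc → (I → 𝒱))
      (cb : Fin Kc → ∀ i, Fin (M i) → I → γ),
      (∀ w, (fun j => ((fun i => cb (kk w) i (m w i) j), (w + z (kk w)) j)) ∈
        tcl s (fun ω => ((fun i => X i ω), V ω))) ∧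
      (∀ d w w', kk w = kk w' →
        (∀ i ∈ B d, (m w i : ℕ) / cs d i = (m w' i : ℕ) / cs d i) → ∀ i ∈ B d, m w i = m w' i) := by
  let CB : Type := ∀ i, Fin (M i) → {f // f ∈ tcl s (X i)}
  let G : CB → (I → 𝒱) → (∀ i, Fin (M i)) → Prop := fun c v m =>
    GoodIdx (DSet s X V v) B cs (fun d => PSet s X (B d)) c m
  let R : CB × (I → 𝒱) → (I → 𝒱) → Prop := fun cz w => (w + cz.2) ∈ tcl s V ∧
    ∃ m, G cz.1 (w + cz.2) m
  have hne : Nonempty CB := ⟨fun i _ => ⟨_, self_mem_tcl s (X i)⟩⟩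
  have hW : (0:ℝ) < Fintype.card (I → 𝒱) := by
    exact_mod_cast Fintype.card_pos
  have hTW : ((tcl s V).card : ℝ) ≤ Fintype.card (I → 𝒱) := by
    exact_mod_cast Finset.card_le_univ _
  have hone : (1:ℝ) ≤ 2 ^ Fintype.card ι := one_le_pow₀ (by norm_num)
  have hden : 1 ≤ 4 * 2 ^ Fintype.card ι * K := by nlinarith
  obtain ⟨f, hf⟩ := cover' R ((tcl s V).card / (Fintype.card (I → 𝒱) * (4 * 2 ^ Fintype.card ι * K)))
    (by
      rw [div_le_one (by positivity)]
      nlinarith)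
    (by
      intro w
      have hcount : ((Finset.univ.filter (fun cz => R cz w)).card : ℝ)
          = ∑ z : I → 𝒱, if w + z ∈ tcl s V then
            ((Finset.univ.filter (fun c : CB => ∃ m, G c (w + z) m)).card : ℝ) else 0 := by
        rw [Finset.card_filter]
        push_cast
        rw [Fintype.sum_prod_type_right]
        apply Finset.sum_congr rfl
        intro z _
        split_ifs with hz
        · simp [R, hz]
        · simp [R, hz]
      have hlow : ∑ z : I → 𝒱, (if w + z ∈ tcl s V then
          ((Fintype.card CB : ℝ) / (4 * 2 ^ Fintype.card ι * K)) else 0) ≤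
          ∑ z : I → 𝒱, if w + z ∈ tcl s V then
            ((Finset.univ.filter (fun c : CB => ∃ m, G c (w + z) m)).card : ℝ) else 0 := by
        apply Finset.sum_le_sum; intro z _
        split_ifs with hz
        · rw [div_le_iff₀' (by linarith)]
          exact types_oneshot s X V M hM B cs hcs K ha hb (w + z) hz
        · exact le_refl _
      refine le_trans (le_trans (le_of_eq ?_) hlow) (le_of_eq (by convert hcount.symm))
      rw [← Finset.sum_filter, Finset.sum_const, nsmul_eq_mul]
      have hcard : (Finset.univ.filter (fun z => w + z ∈ tcl s V)).card = (tcl s V).card := by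
        apply Finset.card_bij' (fun z _ => w + z) (fun z _ => z - w)
        · intro z hz; simpa using hz
        · intro z hz; simpa using hz
        · intro z _; simp
        · intro z _; simp
      rw [hcard, Fintype.card_prod]
      rw [Nat.cast_mul]
      exact cov_arith _ _ _ _ hW.ne')
    Kc hKc
  choose kk hkk1 m hm using hf
  refine ⟨kk, m, fun k => (f k).2, fun k i x => ((f k).1 i x).1, ?_, ?_⟩
  · intro w
    have := (hm w).1
    simpa only [DSet, Finset.mem_filter, Finset.mem_univ, true_and] using this
  · intro d w w' hk hbin i hi
    have h1 := (hm w).2 d (m w') (fun i hi => (hbin i hi).symm) (by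
      have := (hm w').1
      simp only [DSet, Finset.mem_filter, Finset.mem_univ, true_and] at this
      simp only [PSet, Finset.mem_filter, Finset.mem_univ, true_and]
      rw [hk]
      exact tcl_map s _ (fun x : (ι → γ) × 𝒱 => fun i : {i // i ∈ B d} => x.1 i.1) this)
    exact (h1 i hi).symm

section
open Filter Topology

lemma fact_lower (c : ℕ) : (c : ℝ) * Real.log c - c ≤ Real.log c.factorial := by
  rcases Nat.eq_zero_or_pos c with h | h
  · simp [h]
  have hc : (0:ℝ) < c := by exact_mod_cast h
  have h1 := Real.pow_div_factorial_le_exp (c : ℝ) hc.le c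
  have hf : (0:ℝ) < c.factorial := by exact_mod_cast Nat.factorial_pos c
  have h2 := Real.log_le_log (by positivity) h1
  rw [Real.log_exp, Real.log_div (by positivity) hf.ne', Real.log_pow] at h2
  linarith

lemma fact_upper (c : ℕ) : Real.log c.factorial ≤ (c : ℝ) * Real.log c - c + 1 + Real.log c := by
  induction c with
  | zero => simp
  | succ c ih =>
    rcases Nat.eq_zero_or_pos c with h | h
    · simp [h]
    have hc : (0:ℝ) < c := by exact_mod_cast h
    rw [Nat.factorial_succ]
    push_cast
    rw [Real.log_mul (by positivity) (by exact_mod_cast (Nat.factorial_pos c).ne')]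
    have h1 := Real.one_sub_inv_le_log_of_pos (x := ((c:ℝ)+1)/c) (by positivity)
    rw [Real.log_div (by positivity) hc.ne', inv_div] at h1
    have h2 : (1:ℝ) - c/(c+1) = 1/(c+1) := by field_simp; ring
    rw [h2, div_le_iff₀ (by positivity)] at h1
    nlinarith

lemma stir (c : ℕ → ℕ) (x : ℝ) (h : Tendsto (fun n : ℕ => (c n : ℝ) / n) atTop (𝓝 x)) :
    Tendsto (fun n : ℕ => (Real.log (c n).factorial - c n * Real.log n + c n) / n) atTop
      (𝓝 (x * Real.log x)) := by
  have h1 : Tendsto (fun n : ℕ => ((c n : ℝ) / n) * Real.log ((c n : ℝ) / n)) atTop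
      (𝓝 (x * Real.log x)) := (Real.continuous_mul_log.tendsto x).comp h
  have hinv : Tendsto (fun n : ℕ => (1:ℝ) / n) atTop (𝓝 0) := tendsto_one_div_atTop_nhds_zero_nat
  have h2 : Tendsto (fun n : ℕ => (1:ℝ) / n + 2 * (Real.sqrt ((c n : ℝ) / n) * Real.sqrt (1 / n)))
      atTop (𝓝 (0 + 2 * (Real.sqrt x * Real.sqrt 0))) :=
    hinv.add (((h.sqrt).mul (hinv.sqrt)).const_mul 2)
  simp only [Real.sqrt_zero, mul_zero, add_zero] at h2
  have h3 : Tendsto (fun n : ℕ => (Real.log (c n).factorial - c n * Real.log (c n) + c n) / n) atTop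
      (𝓝 0) := by
    refine tendsto_of_tendsto_of_tendsto_of_le_of_le tendsto_const_nhds h2 ?_ ?_
    · intro n
      have := fact_lower (c n)
      exact div_nonneg (by linarith) (by positivity)
    · intro n
      have h4 := fact_upper (c n)
      have h5 : Real.log (c n) ≤ 2 * Real.sqrt (c n) := by
        have h6 := Real.log_le_self (Real.sqrt_nonneg (c n : ℝ))
        rw [Real.log_sqrt (by positivity)] at h6
        linarith
      change (Real.log (c n).factorial - c n * Real.log (c n) + c n) / n ≤
        1 / n + 2 * (Real.sqrt ((c n : ℝ) / n) * Real.sqrt (1 / n))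
      have h7 : Real.sqrt ((c n : ℝ) / n) * Real.sqrt (1 / n) = Real.sqrt (c n) / n := by
        rw [Real.sqrt_div (by positivity), Real.sqrt_div (by positivity), Real.sqrt_one,
          div_mul_div_comm, mul_one, Real.mul_self_sqrt (by positivity)]
      rw [h7, mul_div_assoc', ← add_div]
      apply div_le_div_of_nonneg_right _ (by positivity)
      linarith
  have h4 := h3.add h1
  rw [zero_add] at h4
  refine h4.congr' ?_
  filter_upwards [eventually_gt_atTop 0] with n hn
  have hn' : (0:ℝ) < n := by exact_mod_cast hn
  rcases Nat.eq_zero_or_pos (c n) with h | h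
  · simp [h]
  · have hc : (0:ℝ) < c n := by exact_mod_cast h
    rw [Real.log_div hc.ne' hn'.ne']
    field_simp
    ring

section
variable {Ω : Type} [Fintype Ω] (p : Ω → ℝ)

/-- number of occurrences of the letter `ω` -/
noncomputable def kCount (n : ℕ) (ω : Ω) : ℕ := ⌈(n : ℝ) * p ω⌉₊

/-- index set of block positions -/
abbrev IPos (n : ℕ) : Type := Σ ω : Ω, Fin (kCount p n ω)

/-- base sequence -/
def bseq (n : ℕ) : IPos p n → Ω := Sigma.fst

lemma kCount_tendsto (hp : ∀ ω, 0 ≤ p ω) (ω : Ω) :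
    Tendsto (fun n : ℕ => (kCount p n ω : ℝ) / n) atTop (𝓝 (p ω)) := by
  have h := (tendsto_nat_ceil_mul_div_atTop (R := ℝ) (hp ω)).comp tendsto_natCast_atTop_atTop
  refine h.congr ?_
  intro n
  simp [kCount, mul_comm]

lemma card_IPos (n : ℕ) : Fintype.card (IPos p n) = ∑ ω, kCount p n ω := by
  simp [IPos]

lemma asym (hp : ∀ ω, 0 ≤ p ω) (hs : ∑ ω, p ω = 1) {A : Type} [Fintype A] [DecidableEq A]
    (F : Ω → A) :
    Tendsto (fun n : ℕ => Real.logb 2 (tcl (bseq p n) F).card / n) atTop (𝓝 (ent p F)) := by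
  classical
  let c : A → ℕ → ℕ := fun a n => ∑ ω, if F ω = a then kCount p n ω else 0
  have hc : ∀ n a, (Finset.univ.filter (fun j => F (bseq p n j) = a)).card = c a n := by
    intro n a
    rw [Finset.card_filter, Fintype.sum_sigma]
    simp only [c]
    apply Finset.sum_congr rfl
    intro ω _
    by_cases h : F ω = a <;> simp [bseq, h]
  have hclim : ∀ a, Tendsto (fun n : ℕ => (c a n : ℝ) / n) atTop (𝓝 (prOf p F a)) := by
    intro a
    have : ∀ n : ℕ, (c a n : ℝ) / n = ∑ ω, if F ω = a then (kCount p n ω : ℝ) / n else 0 := by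
      intro n
      simp only [c]
      push_cast
      rw [Finset.sum_div]
      apply Finset.sum_congr rfl
      intro ω _
      split_ifs <;> simp
    simp only [this, prOf]
    apply tendsto_finsetSum
    intro ω _
    split_ifs
    · exact kCount_tendsto p hp ω
    · exact tendsto_const_nhds
  let N : ℕ → ℕ := fun n => Fintype.card (IPos p n)
  have hNc : ∀ n, N n = ∑ a, c a n := by
    intro n
    simp only [N, c, card_IPos]
    rw [Finset.sum_comm]
    simp
  have hNlim : Tendsto (fun n : ℕ => (N n : ℝ) / n) atTop (𝓝 1) := by
    simp only [N, card_IPos]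
    push_cast
    simp only [Finset.sum_div]
    rw [← hs]
    exact tendsto_finsetSum _ fun ω _ => kCount_tendsto p hp ω
  have hN1 := stir N 1 hNlim
  have hc1 := fun a => stir (c a) _ (hclim a)
  have h2 := (hN1.sub (tendsto_finsetSum Finset.univ fun a _ => hc1 a)).div_const (Real.log 2)
  have e : (1 * Real.log 1 - ∑ a, prOf p F a * Real.log (prOf p F a)) / Real.log 2 = ent p F := by
    simp only [Real.log_one, mul_zero, zero_sub, ent, Real.logb, Finset.sum_neg_distrib, neg_div]
    rw [Finset.sum_div]
    congr 1
    apply Finset.sum_congr rfl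
    intro a _
    ring
  rw [e] at h2
  refine h2.congr ?_
  intro n
  have h3 := tcl_card (bseq p n) F
  simp only [hc] at h3
  have h4 : Real.log (tcl (bseq p n) F).card + ∑ a, Real.log (c a n).factorial
      = Real.log (N n).factorial := by
    rw [← Real.log_prod (fun a _ => by exact_mod_cast (Nat.factorial_pos _).ne'),
      ← Real.log_mul (by exact_mod_cast (tcl_pos (bseq p n) F).ne')
        (Finset.prod_ne_zero_iff.2 fun a _ => by exact_mod_cast (Nat.factorial_pos _).ne')]
    congr 1
    exact_mod_cast h3
  have h5 : (N n : ℝ) = ∑ a, (c a n : ℝ) := by exact_mod_cast hNc n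
  rw [Real.logb, ← Finset.sum_div, Finset.sum_add_distrib, Finset.sum_sub_distrib,
    ← Finset.sum_mul, ← h5, ← h4]
  ring
end

end

open scoped Classical in
lemma codeOf (L : ℕ) (S : Fin 2 → Type) [∀ n, Fintype (S n)] (A : Fin 2 → Fin 2 → Type)
    [∀ n q, Fintype (A n q)] (st : ∀ n, Msg L × Msg L → S n) (an : ∀ n q, Msg L × Msg L → A n q)
    (hfac : ∀ n q w w', st n w = st n w' → an n q w = an n q w')
    (hdec : ∀ k q1 q2, stdP k (q1, q2) ≠ 0 → ∀ w w', an 0 q1 w = an 0 q1 w' →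
      an 1 q2 w = an 1 q2 w' → target k w = target k w')
    (a : Fin 2 → ℕ) (b : Fin 2 → Fin 2 → ℕ) (ha : ∀ n, Fintype.card (S n) ≤ 2 ^ a n)
    (hb : ∀ n q, Fintype.card (A n q) ≤ 2 ^ b n q) :
    ∃ C : Code L, IsZeroError C.base ∧ C.base.stor 0 = a 0 ∧ C.base.stor 1 = a 1 ∧
      betaRate C.base 0 + betaRate C.base 1 = ((b 0 0 + b 0 1 + b 1 0 + b 1 1 : ℕ) : ℝ) / 2 := by
  have hS : ∀ n, ∃ e : S n → (Fin (a n) → ZMod 2), Function.Injective e := by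
    intro n
    have : Nonempty (S n ↪ (Fin (a n) → ZMod 2)) := by
      apply Function.Embedding.nonempty_of_card_le
      simpa [ZMod.card] using ha n
    exact ⟨this.some, this.some.injective⟩
  have hA : ∀ n q, ∃ e : A n q → (Fin (b n q) → ZMod 2), Function.Injective e := by
    intro n q
    have : Nonempty (A n q ↪ (Fin (b n q) → ZMod 2)) := by
      apply Function.Embedding.nonempty_of_card_le
      simpa [ZMod.card] using hb n q
    exact ⟨this.some, this.some.injective⟩
  choose e he using hS
  choose g hg using hA
  have hans : ∀ n q, ∃ r : (Fin (a n) → ZMod 2) → (Fin (b n q) → ZMod 2),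
      ∀ w, r (e n (st n w)) = g n q (an n q w) := by
    intro n q
    have h : Function.FactorsThrough (fun w => g n q (an n q w)) (fun w => e n (st n w)) := by
      intro w w' hww
      exact congrArg (g n q) (hfac n q w w' (he n hww))
    obtain ⟨r, hr⟩ := (Function.factorsThrough_iff _).1 h
    exact ⟨r, fun w => (congrFun hr w).symm⟩
  choose r hr using hans
  have hd : ∀ k q1 q2, ∃ d : (Fin (b 0 q1) → ZMod 2) → (Fin (b 1 q2) → ZMod 2) → Msg L,
      stdP k (q1, q2) ≠ 0 → ∀ w, d (g 0 q1 (an 0 q1 w)) (g 1 q2 (an 1 q2 w)) = target k w := by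
    intro k q1 q2
    by_cases hP : stdP k (q1, q2) ≠ 0
    · have h : Function.FactorsThrough (fun w : Msg L × Msg L => target k w)
          (fun w => (g 0 q1 (an 0 q1 w), g 1 q2 (an 1 q2 w))) := by
        intro w w' hww
        simp only [Prod.mk.injEq] at hww
        exact hdec k q1 q2 hP w w' (hg _ _ hww.1) (hg _ _ hww.2)
      obtain ⟨r, hr⟩ := (Function.factorsThrough_iff _).1 h
      exact ⟨fun x y => r (x, y), fun _ w => (congrFun hr w).symm⟩
    · exact ⟨fun _ _ => 0, fun h => absurd h hP⟩
  choose d hd using hd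
  refine ⟨{ Q := Fin 2, base := {
      P := stdP
      P_nonneg := ?_
      P_sum := ?_
      stor := a
      phi := fun n w => e n (st n w)
      blen := b
      ans := r
      dec := d
      privacy := ?_ } }, ?_, rfl, rfl, ?_⟩
  · intro k qq
    unfold stdP
    split_ifs <;> norm_num
  · intro k
    rw [Fintype.sum_prod_type]
    fin_cases k <;> simp [stdP, Fin.sum_univ_two] <;> norm_num
  · intro n q s
    congr 1
    simp only [Fintype.sum_prod_type]
    fin_cases n <;> fin_cases q <;> simp [stdP, Fin.sum_univ_two]
  · intro k w qq hP
    simp only [retrieved, hr]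
    exact hd k qq.1 qq.2 hP w
  · simp only [betaRate, Fintype.sum_prod_type]
    simp [stdP, Fin.sum_univ_two]
    ring

/-- components stored at a database -/
def sset : Fin 2 → Finset (Fin 5) := ![{0, 1, 2}, {3, 4}]

/-- components requested from a database -/
def aset : Fin 2 → Fin 2 → Finset (Fin 5) := ![![{0, 1}, {0, 2}], ![{3}, {4}]]

lemma aset_sub (n q : Fin 2) : aset n q ⊆ sset n := by
  revert n q; decide

open scoped Classical in
lemma code_of_enc {t L : ℕ} {Ω γ I : Type} [Fintype I] [Fintype γ] (s : I → Ω)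
    (X : Fin 5 → Ω → γ) (V : Ω → Msg t × Msg t) (f11 f12 f21 f22 : γ × γ × γ → Msg t)
    (hf : ∀ j, (V (s j)).1 = f11 (X 0 (s j), X 1 (s j), X 3 (s j)) ∧
        (V (s j)).1 = f22 (X 0 (s j), X 2 (s j), X 4 (s j)) ∧
        (V (s j)).2 = f12 (X 0 (s j), X 1 (s j), X 4 (s j)) ∧
        (V (s j)).2 = f21 (X 0 (s j), X 2 (s j), X 3 (s j)))
    (emb : Msg L → (I → Msg t)) (hemb : Function.Injective emb) (M : Fin 5 → ℕ) (Kc : ℕ)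
    (kk : (I → Msg t × Msg t) → Fin Kc) (m : (I → Msg t × Msg t) → ∀ i, Fin (M i))
    (z : Fin Kc → (I → Msg t × Msg t)) (cb : Fin Kc → ∀ i, Fin (M i) → I → γ)
    (htyp : ∀ w, (fun j => ((fun i => cb (kk w) i (m w i) j), (w + z (kk w)) j)) ∈
        tcl s (fun ω => ((fun i => X i ω), V ω)))
    (ca cc : Fin 5 → ℕ)
    (hfac : ∀ n w w', kk w = kk w' →
      (∀ i ∈ sset n, (m w i : ℕ) / ca i = (m w' i : ℕ) / ca i) →
      (∀ i ∈ sset n, (m w i : ℕ) / cc i = (m w' i : ℕ) / cc i))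
    (hdec : ∀ q1 q2 w w', kk w = kk w' →
      (∀ i ∈ aset 0 q1 ∪ aset 1 q2, (m w i : ℕ) / cc i = (m w' i : ℕ) / cc i) →
      (∀ i ∈ aset 0 q1 ∪ aset 1 q2, m w i = m w' i))
    (a : Fin 2 → ℕ) (b : Fin 2 → Fin 2 → ℕ)
    (ha : ∀ n, Kc * ∏ i ∈ sset n, (M i / ca i + 1) ≤ 2 ^ a n)
    (hb : ∀ n q, Kc * ∏ i ∈ aset n q, (M i / cc i + 1) ≤ 2 ^ b n q) :
    ∃ C : Code L, IsZeroError C.base ∧ C.base.stor 0 = a 0 ∧ C.base.stor 1 = a 1 ∧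
      betaRate C.base 0 + betaRate C.base 1 = ((b 0 0 + b 0 1 + b 1 0 + b 1 1 : ℕ) : ℝ) / 2 := by
  let E : Msg L × Msg L → (I → Msg t × Msg t) := fun w j => (emb w.1 j, emb w.2 j)
  let bin : ∀ (c : Fin 5 → ℕ) (i : Fin 5) (x : Fin (M i)), Fin (M i / c i + 1) := fun c i x =>
    ⟨(x : ℕ) / c i, Nat.lt_succ_of_le (Nat.div_le_div_right x.2.le)⟩
  have hbin : ∀ c i x y, bin c i x = bin c i y ↔ (x : ℕ) / c i = (y : ℕ) / c i := by
    intro c i x y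
    simp [bin]
  refine codeOf L (fun n => Fin Kc × (∀ i : {i // i ∈ sset n}, Fin (M i.1 / ca i.1 + 1)))
    (fun n q => Fin Kc × (∀ i : {i // i ∈ aset n q}, Fin (M i.1 / cc i.1 + 1)))
    (fun n w => (kk (E w), fun i => bin ca i.1 (m (E w) i.1)))
    (fun n q w => (kk (E w), fun i => bin cc i.1 (m (E w) i.1))) ?_ ?_ a b ?_ ?_
  · intro n q w w' h
    simp only [Prod.mk.injEq, funext_iff, Subtype.forall, hbin] at h ⊢
    exact ⟨h.1, fun i hi => hfac n _ _ h.1 h.2 i (aset_sub n q hi)⟩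
  · intro k q1 q2 hP w w' h1 h2
    simp only [Prod.mk.injEq, funext_iff, Subtype.forall, hbin] at h1 h2
    have hm := hdec q1 q2 (E w) (E w') h1.1 (fun i hi => by
      rcases Finset.mem_union.1 hi with hi | hi
      · exact h1.2 i hi
      · exact h2.2 i hi)
    obtain ⟨σ, hσ⟩ := (mem_tcl s _ _).1 (htyp (E w))
    obtain ⟨σ', hσ'⟩ := (mem_tcl s _ _).1 (htyp (E w'))
    have hk := h1.1
    rw [← hk] at hσ'
    have k1 : ∀ j i, cb (kk (E w)) i (m (E w) i) j = X i (s (σ j)) := fun j i =>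
      congrFun (congrArg Prod.fst (congrFun hσ j)) i
    have k2 : ∀ j i, cb (kk (E w)) i (m (E w') i) j = X i (s (σ' j)) := fun j i =>
      congrFun (congrArg Prod.fst (congrFun hσ' j)) i
    have k3 : ∀ j, (E w + z (kk (E w))) j = V (s (σ j)) := fun j =>
      (congrArg Prod.snd (congrFun hσ j))
    have k4 : ∀ j, (E w' + z (kk (E w))) j = V (s (σ' j)) := fun j =>
      (congrArg Prod.snd (congrFun hσ' j))
    have k5 : ∀ j, ∀ i ∈ aset 0 q1 ∪ aset 1 q2, X i (s (σ j)) = X i (s (σ' j)) := by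
      intro j i hi
      rw [← k1, ← k2, hm i hi]
    have key1 : (∀ j, (V (s (σ j))).1 = (V (s (σ' j))).1) → w.1 = w'.1 := by
      intro h
      apply hemb
      funext j
      have := h j
      rw [← k3, ← k4] at this
      simpa [E] using this
    have key2 : (∀ j, (V (s (σ j))).2 = (V (s (σ' j))).2) → w.2 = w'.2 := by
      intro h
      apply hemb
      funext j
      have := h j
      rw [← k3, ← k4] at this
      simpa [E] using this
    fin_cases k <;> fin_cases q1 <;> fin_cases q2 <;> simp [stdP, target] at hP ⊢
    · apply key1; intro j
      rw [(hf _).1, (hf (σ' j)).1, k5 j 0 (by decide), k5 j 1 (by decide), k5 j 3 (by decide)]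
    · apply key1; intro j
      rw [(hf _).2.1, (hf (σ' j)).2.1, k5 j 0 (by decide), k5 j 2 (by decide), k5 j 4 (by decide)]
    · apply key2; intro j
      rw [(hf _).2.2.1, (hf (σ' j)).2.2.1, k5 j 0 (by decide), k5 j 1 (by decide),
        k5 j 4 (by decide)]
    · apply key2; intro j
      rw [(hf _).2.2.2, (hf (σ' j)).2.2.2, k5 j 0 (by decide), k5 j 2 (by decide),
        k5 j 3 (by decide)]
  · intro n
    rw [Fintype.card_prod, Fintype.card_pi, Fintype.card_fin]
    simp only [Fintype.card_fin]
    rw [Finset.prod_coe_sort (sset n) (fun i => M i / ca i + 1)]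
    exact ha n
  · intro n q
    rw [Fintype.card_prod, Fintype.card_pi, Fintype.card_fin]
    simp only [Fintype.card_fin]
    rw [Finset.prod_coe_sort (aset n q) (fun i => M i / cc i + 1)]
    exact hb n q

section
open Filter Topology

/-- `⌈2^x⌉` -/
noncomputable def cl2 (x : ℝ) : ℕ := ⌈(2:ℝ) ^ x⌉₊

lemma cl2_pos (x : ℝ) : 0 < cl2 x := Nat.ceil_pos.2 (by positivity)

lemma le_cl2 (x : ℝ) : (2:ℝ) ^ x ≤ cl2 x := Nat.le_ceil _

lemma cl2_sub (x : ℝ) : (cl2 x : ℝ) - 1 ≤ (2:ℝ) ^ x := by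
  have := Nat.ceil_lt_add_one (a := (2:ℝ) ^ x) (by positivity)
  unfold cl2; linarith

lemma cl2_le {x : ℝ} (hx : 0 ≤ x) : (cl2 x : ℝ) ≤ (2:ℝ) ^ (x + 1) := by
  have h1 := cl2_sub x
  have h2 : (1:ℝ) ≤ 2 ^ x := Real.one_le_rpow (by norm_num) hx
  rw [Real.rpow_add (by norm_num), Real.rpow_one]
  linarith

lemma asym_bd {Ω : Type} [Fintype Ω] (p : Ω → ℝ) (hp : ∀ ω, 0 ≤ p ω) (hs : ∑ ω, p ω = 1)
    {A : Type} [Fintype A] [DecidableEq A] (F : Ω → A) {ε : ℝ} (hε : 0 < ε) :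
    ∀ᶠ n : ℕ in atTop, (2:ℝ) ^ ((n:ℝ) * (ent p F - ε)) ≤ (tcl (bseq p n) F).card ∧
      ((tcl (bseq p n) F).card : ℝ) ≤ (2:ℝ) ^ ((n:ℝ) * (ent p F + ε)) := by
  have h := asym p hp hs F
  filter_upwards [h.eventually (lt_mem_nhds (show ent p F - ε < ent p F by linarith)),
    h.eventually (gt_mem_nhds (show ent p F < ent p F + ε by linarith)),
    eventually_gt_atTop 0] with n h1 h2 hn
  have hn' : (0:ℝ) < n := by exact_mod_cast hn
  have hT : (0:ℝ) < (tcl (bseq p n) F).card := by exact_mod_cast tcl_pos (bseq p n) F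
  rw [lt_div_iff₀ hn'] at h1
  rw [div_lt_iff₀ hn'] at h2
  constructor
  · rw [← Real.le_logb_iff_rpow_le (by norm_num) hT]; linarith
  · rw [← Real.logb_le_iff_le_rpow (by norm_num) hT]; linarith

lemma rpow_le2 {x y : ℝ} (h : x ≤ y) : (2:ℝ) ^ x ≤ (2:ℝ) ^ y :=
  Real.rpow_le_rpow_of_exponent_le (by norm_num) h

lemma prod_le_rpow {ι : Type} (E : Finset ι) (f : ι → ℝ) (g : ι → ℝ) (h0 : ∀ i ∈ E, 0 ≤ f i)
    (h : ∀ i ∈ E, f i ≤ (2:ℝ) ^ g i) : ∏ i ∈ E, f i ≤ (2:ℝ) ^ (∑ i ∈ E, g i) := by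
  rw [Real.rpow_sum_of_pos (by norm_num)]
  exact Finset.prod_le_prod h0 h

lemma rpow_le_prod {ι : Type} (E : Finset ι) (f : ι → ℝ) (g : ι → ℝ)
    (h : ∀ i ∈ E, (2:ℝ) ^ g i ≤ f i) : (2:ℝ) ^ (∑ i ∈ E, g i) ≤ ∏ i ∈ E, f i := by
  rw [Real.rpow_sum_of_pos (by norm_num)]
  exact Finset.prod_le_prod (fun i _ => by positivity) h

lemma ent_unif {t : ℕ} (S : RVSetup t) : ent S.p S.V = 2 * t := by
  unfold ent
  simp only [S.V_unif]
  rw [Finset.sum_const, Finset.card_univ, nsmul_eq_mul]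
  have h1 : Real.logb 2 ((2:ℝ) ^ (2 * t))⁻¹ = - (2 * t : ℕ) := by
    rw [Real.logb_inv, Real.logb_pow, Real.logb_self_eq_one (by norm_num)]
    simp
  rw [h1]
  have h2 : (Fintype.card (Msg t × Msg t) : ℝ) = (2:ℝ) ^ (2 * t) := by
    simp [Msg, ZMod.card]
    ring
  rw [h2]
  push_cast
  field_simp

lemma card_IPos_le {Ω : Type} [Fintype Ω] (p : Ω → ℝ) (hp : ∀ ω, 0 ≤ p ω) (hs : ∑ ω, p ω = 1)
    (n : ℕ) : n ≤ Fintype.card (IPos p n) ∧ Fintype.card (IPos p n) ≤ n + Fintype.card Ω := by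
  rw [card_IPos]
  have h1 : (n:ℝ) = ∑ ω, (n:ℝ) * p ω := by rw [← Finset.mul_sum, hs, mul_one]
  constructor
  · have : (n : ℝ) ≤ ((∑ ω, kCount p n ω : ℕ) : ℝ) := by
      push_cast
      conv_lhs => rw [h1]
      exact Finset.sum_le_sum fun ω _ => Nat.le_ceil _
    exact_mod_cast this
  · have : ((∑ ω, kCount p n ω : ℕ) : ℝ) ≤ ((n + Fintype.card Ω : ℕ) : ℝ) := by
      push_cast
      conv_rhs => rw [h1]
      have h2 : (Fintype.card Ω : ℝ) = ∑ ω : Ω, (1:ℝ) := by simp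
      rw [h2, ← Finset.sum_add_distrib]
      exact Finset.sum_le_sum fun ω _ =>
        (Nat.ceil_lt_add_one (mul_nonneg (Nat.cast_nonneg _) (hp ω))).le
    exact_mod_cast this

lemma ev_const (C δ : ℝ) (hδ : 0 < δ) : ∀ᶠ n : ℕ in atTop, C ≤ (2:ℝ) ^ ((n:ℝ) * δ) := by
  have h : Tendsto (fun n : ℕ => ((2:ℝ) ^ δ) ^ n) atTop atTop :=
    tendsto_pow_atTop_atTop_of_one_lt (Real.one_lt_rpow (by norm_num) hδ)
  filter_upwards [h.eventually_ge_atTop C] with n hn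
  rwa [mul_comm, Real.rpow_mul (by norm_num), Real.rpow_natCast]

lemma ev_lin (a b δ : ℝ) (hδ : 0 < δ) : ∀ᶠ n : ℕ in atTop, a * n + b < (2:ℝ) ^ ((n:ℝ) * δ) := by
  have h : Tendsto (fun n : ℕ => (n:ℝ) ^ 1 / ((2:ℝ) ^ δ) ^ n) atTop (𝓝 0) :=
    tendsto_pow_const_div_const_pow_of_one_lt 1 (Real.one_lt_rpow (by norm_num) hδ)
  have h2 : Tendsto (fun n : ℕ => (n:ℝ) ^ 0 / ((2:ℝ) ^ δ) ^ n) atTop (𝓝 0) :=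
    tendsto_pow_const_div_const_pow_of_one_lt 0 (Real.one_lt_rpow (by norm_num) hδ)
  have h3 := (h.const_mul a).add (h2.const_mul b)
  simp only [mul_zero, add_zero, pow_one, pow_zero] at h3
  filter_upwards [h3.eventually (gt_mem_nhds (show (0:ℝ) < 1 by norm_num))] with n hn
  have hp : (0:ℝ) < ((2:ℝ) ^ δ) ^ n := by positivity
  rw [mul_comm (n:ℝ) δ, Real.rpow_mul (by norm_num), Real.rpow_natCast]
  have : (a * n + b) / ((2:ℝ) ^ δ) ^ n < 1 := by
    calc _ = a * (↑n / (2 ^ δ) ^ n) + b * (1 / (2 ^ δ) ^ n) := by ring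
      _ < 1 := hn
  rwa [div_lt_one hp] at this

end

section
open Filter Topology

lemma sum_ineq_a {ι : Type} (E : Finset ι) (hE : E.card ≤ 5) (H g : ι → ℝ) (hv hj n δ : ℝ)
    (hn : 0 ≤ n) (hδ : 0 < δ) (h : ∑ i ∈ E, H i + hv - hj ≤ ∑ i ∈ E, g i) :
    n * (hv + δ / 10) + ∑ i ∈ E, n * (H i + δ / 10) ≤
      n * δ + n * (hj - δ / 10) + ∑ i ∈ E, n * g i := by
  rw [← Finset.mul_sum, ← Finset.mul_sum, Finset.sum_add_distrib, Finset.sum_const, nsmul_eq_mul,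
    ← mul_add, ← mul_add, ← mul_add]
  apply mul_le_mul_of_nonneg_left _ hn
  have : (E.card : ℝ) ≤ 5 := by exact_mod_cast hE
  nlinarith

lemma sum_ineq_b {ι : Type} (J : Finset ι) (hJ : J.Nonempty) (H r : ι → ℝ) (hB hJB n δ : ℝ)
    (hn : 0 ≤ n) (hδ : 0 < δ) (h : ∑ i ∈ J, r i ≤ ∑ i ∈ J, H i - (hB - hJB)) :
    n * (hB + δ / 10) + ∑ i ∈ J, n * (r i - δ) + n * (δ / 10) ≤
      n * (hJB - δ / 10) + ∑ i ∈ J, n * (H i - δ / 10) := by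
  rw [← Finset.mul_sum, ← Finset.mul_sum, Finset.sum_sub_distrib, Finset.sum_sub_distrib,
    Finset.sum_const, Finset.sum_const, nsmul_eq_mul, nsmul_eq_mul,
    ← mul_add, ← mul_add, ← mul_add]
  apply mul_le_mul_of_nonneg_left _ hn
  have : (1:ℝ) ≤ J.card := by exact_mod_cast hJ.card_pos
  nlinarith

lemma kc_ineq (T W lw C x1 x2 x3 Kc : ℝ) (hW : 0 < W) (hC : 0 < C) (hx2 : 0 < x2)
    (hT : W ≤ T * x1) (hl : lw * C * x1 * x2 < x3) (hK : x3 ≤ Kc) (hT0 : 0 < T) (hl0 : 0 ≤ lw) :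
    lw < T / (W * (C * x2)) * Kc := by
  rw [div_mul_eq_mul_div, lt_div_iff₀ (by positivity)]
  calc lw * (W * (C * x2)) ≤ lw * ((T * x1) * (C * x2)) := by gcongr
    _ = T * (lw * C * x1 * x2) := by ring
    _ < T * x3 := by gcongr
    _ ≤ T * Kc := by gcongr

open scoped Classical in
lemma card_W (I : Type) [Fintype I] (t : ℕ) : (Fintype.card (I → Msg t × Msg t) : ℝ)
    = (2:ℝ) ^ (2 * t * Fintype.card I) := by
  rw [Fintype.card_fun, Fintype.card_prod, Fintype.card_fun, ZMod.card, Fintype.card_fin]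
  push_cast
  rw [← pow_add, ← pow_mul]
  congr 1
  ring

set_option maxHeartbeats 1000000 in
lemma params {t : ℕ} (S : RVSetup t) {Δ : Type} [Fintype Δ] (B : Δ → Finset (Fin 5))
    (ρ : Δ → Fin 5 → ℝ) (γr : Fin 5 → ℝ)
    (hA : ∀ E : Finset (Fin 5), (∑ i ∈ E, ent S.p (S.X i)) - jEntCondS S.p S.X E S.V ≤
      ∑ i ∈ E, γr i)
    (hB : ∀ d, ∀ J ⊆ B d, ∑ j ∈ J, (γr j - ρ d j) ≤ (∑ j ∈ J, ent S.p (S.X j))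
      - (jEnt S.p S.X (B d) - jEnt S.p S.X (B d \ J)))
    (δ : ℝ) (hδ : 0 < δ) :
    ∀ᶠ n : ℕ in atTop, ∃ (kk : (IPos S.p n → Msg t × Msg t) → Fin (cl2 (n * (3 * δ))))
      (m : (IPos S.p n → Msg t × Msg t) → ∀ i, Fin (cl2 (n * γr i)))
      (z : Fin (cl2 (n * (3 * δ))) → (IPos S.p n → Msg t × Msg t))
      (cb : Fin (cl2 (n * (3 * δ))) → ∀ i, Fin (cl2 (n * γr i)) → IPos S.p n → S.γ),
      (∀ w, (fun j => ((fun i => cb (kk w) i (m w i) j), (w + z (kk w)) j)) ∈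
        tcl (bseq S.p n) (fun ω => ((fun i => S.X i ω), S.V ω))) ∧
      (∀ d w w', kk w = kk w' →
        (∀ i ∈ B d, (m w i : ℕ) / cl2 (n * (γr i - ρ d i - δ)) =
          (m w' i : ℕ) / cl2 (n * (γr i - ρ d i - δ))) → ∀ i ∈ B d, m w i = m w' i) := by
  have hε : 0 < δ / 10 := by positivity
  have eV := asym_bd S.p S.p_nonneg S.p_sum S.V hε
  have eX := eventually_all.2 fun i => asym_bd S.p S.p_nonneg S.p_sum (S.X i) hε
  have eE := eventually_all.2 fun E : Finset (Fin 5) => asym_bd S.p S.p_nonneg S.p_sum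
    (fun ω => fun i : {i // i ∈ E} => S.X i.1 ω) hε
  have eEV := eventually_all.2 fun E : Finset (Fin 5) => asym_bd S.p S.p_nonneg S.p_sum
    (fun ω => ((fun i : {i // i ∈ E} => S.X i.1 ω), S.V ω)) hε
  filter_upwards [eV, eX, eE, eEV, ev_const (2 * Fintype.card Δ * 2 ^ Fintype.card (Fin 5)) _ hε,
    ev_const ((2:ℝ) ^ (2 * t * Fintype.card S.Ω)) _ hε,
    ev_lin ((2 * t) * (4 * 2 ^ Fintype.card (Fin 5)))
      ((2 * t * Fintype.card S.Ω) * (4 * 2 ^ Fintype.card (Fin 5))) δ hδ]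
    with n hV hX hE hEV hc1 hc2 hlin
  have hn : (0:ℝ) ≤ n := Nat.cast_nonneg n
  have h2 : (0:ℝ) < 2 := by norm_num
  refine enc_exists (bseq S.p n) S.X S.V (fun i => cl2 (n * γr i)) (fun i => cl2_pos _) B
    (fun d i => cl2 (n * (γr i - ρ d i - δ))) (fun d i => cl2_pos _) ((2:ℝ) ^ ((n:ℝ) * δ))
    ?_ ?_ (Real.one_le_rpow (by norm_num) (by positivity)) _ ?_
  · intro E
    have hEc : E.card ≤ 5 := by simpa using E.card_le_univ
    have key := sum_ineq_a E hEc (fun i => ent S.p (S.X i)) γr (ent S.p S.V)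
      (ent S.p (fun ω => ((fun i : {i // i ∈ E} => S.X i.1 ω), S.V ω))) n δ hn hδ
      (by have := hA E; unfold jEntCondS at this; linarith)
    calc _ ≤ (2:ℝ) ^ ((n:ℝ) * (ent S.p S.V + δ / 10)) *
          (2:ℝ) ^ (∑ i ∈ E, (n:ℝ) * (ent S.p (S.X i) + δ / 10)) := by
          apply mul_le_mul hV.2 _ (Finset.prod_nonneg fun i _ => Nat.cast_nonneg _) (by positivity)
          exact prod_le_rpow E _ _ (fun i _ => Nat.cast_nonneg _) fun i _ => (hX i).2
      _ ≤ (2:ℝ) ^ ((n:ℝ) * δ) * (2:ℝ) ^ ((n:ℝ) *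
            (ent S.p (fun ω => ((fun i : {i // i ∈ E} => S.X i.1 ω), S.V ω)) - δ / 10)) *
          (2:ℝ) ^ (∑ i ∈ E, (n:ℝ) * γr i) := by
          rw [← Real.rpow_add h2, ← Real.rpow_add h2, ← Real.rpow_add h2]
          exact rpow_le2 key
      _ ≤ _ := by
          apply mul_le_mul _ _ (by positivity) (by positivity)
          · exact mul_le_mul_of_nonneg_left (hEV E).1 (by positivity)
          · exact rpow_le_prod E _ _ fun i _ => le_cl2 _
  · intro d J hJ hJne
    have key := sum_ineq_b J hJne (fun i => ent S.p (S.X i)) (fun i => γr i - ρ d i)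
      (jEnt S.p S.X (B d)) (jEnt S.p S.X (B d \ J)) n δ hn hδ (hB d J hJ)
    have hpn : ∀ j ∈ J, (0:ℝ) ≤ (cl2 (n * (γr j - ρ d j - δ)) : ℝ) - 1 := by
      intro j _
      have : (1:ℝ) ≤ cl2 (n * (γr j - ρ d j - δ)) := by exact_mod_cast cl2_pos _
      linarith
    calc _ ≤ ((2:ℝ) ^ ((n:ℝ) * (jEnt S.p S.X (B d) + δ / 10)) *
          (2:ℝ) ^ (∑ i ∈ J, (n:ℝ) * (γr i - ρ d i - δ))) * (2:ℝ) ^ ((n:ℝ) * (δ / 10)) := by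
          apply mul_le_mul _ hc1 (by positivity) (by positivity)
          apply mul_le_mul (hE (B d)).2 _ (Finset.prod_nonneg hpn) (by positivity)
          exact prod_le_rpow J _ _ hpn fun i _ => cl2_sub _
      _ ≤ (2:ℝ) ^ ((n:ℝ) * (jEnt S.p S.X (B d \ J) - δ / 10)) *
          (2:ℝ) ^ (∑ i ∈ J, (n:ℝ) * (ent S.p (S.X i) - δ / 10)) := by
          rw [← Real.rpow_add h2, ← Real.rpow_add h2, ← Real.rpow_add h2]
          exact rpow_le2 key
      _ ≤ _ := by
          apply mul_le_mul (hE (B d \ J)).1 _ (by positivity) (by positivity)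
          exact rpow_le_prod J _ _ fun i _ => (hX i).1
  · have hI := card_IPos_le S.p S.p_nonneg S.p_sum n
    have hIr : (Fintype.card (IPos S.p n) : ℝ) ≤ n + Fintype.card S.Ω := by exact_mod_cast hI.2
    have hlw : Real.log ((2:ℝ) ^ (2 * t * Fintype.card (IPos S.p n))) ≤
        2 * t * (n + Fintype.card S.Ω) := by
      rw [Real.log_pow]
      push_cast
      have : Real.log 2 ≤ 1 := by
        have := Real.log_two_lt_d9; linarith
      have hl0 : 0 ≤ Real.log 2 := Real.log_nonneg (by norm_num)
      calc (2 * t * Fintype.card (IPos S.p n) : ℝ) * Real.log 2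
          ≤ (2 * t * Fintype.card (IPos S.p n) : ℝ) * 1 := by gcongr
        _ ≤ _ := by rw [mul_one]; gcongr
    rw [card_W]
    refine kc_ineq _ _ _ _ ((2:ℝ) ^ ((n:ℝ) * δ)) _ ((2:ℝ) ^ ((n:ℝ) * (3 * δ))) _
      (by positivity) (by positivity) (by positivity) ?_ ?_ (le_cl2 _)
      (by exact_mod_cast tcl_pos (bseq S.p n) S.V)
      (Real.log_nonneg (by exact one_le_pow₀ (by norm_num)))
    · have h3 := hV.1
      rw [ent_unif] at h3
      calc (2:ℝ) ^ (2 * t * Fintype.card (IPos S.p n)) ≤ 2 ^ (2 * t * (n + Fintype.card S.Ω)) :=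
            pow_le_pow_right₀ (by norm_num) (Nat.mul_le_mul_left _ hI.2)
        _ = 2 ^ (2 * t * n) * 2 ^ (2 * t * Fintype.card S.Ω) := by rw [mul_add, pow_add]
        _ ≤ 2 ^ (2 * t * n) * (2:ℝ) ^ ((n:ℝ) * (δ / 10)) := by gcongr
        _ = (2:ℝ) ^ ((n:ℝ) * (2 * t - δ / 10)) *
            ((2:ℝ) ^ ((n:ℝ) * (δ / 10)) * (2:ℝ) ^ ((n:ℝ) * (δ / 10))) := by
            rw [← Real.rpow_natCast 2 (2 * t * n), ← Real.rpow_add h2, ← Real.rpow_add h2,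
              ← Real.rpow_add h2]
            congr 1
            push_cast
            ring
        _ ≤ _ := by
            apply mul_le_mul h3 _ (by positivity) (by positivity)
            rw [← Real.rpow_add h2]
            apply rpow_le2
            nlinarith
    · have e : (2:ℝ) ^ ((n:ℝ) * (3 * δ)) = (2:ℝ) ^ ((n:ℝ) * δ) * (2:ℝ) ^ ((n:ℝ) * δ) *
          (2:ℝ) ^ ((n:ℝ) * δ) := by
        rw [← Real.rpow_add h2, ← Real.rpow_add h2]
        congr 1
        ring
      rw [e]
      apply mul_lt_mul_of_pos_right _ (by positivity)
      apply mul_lt_mul_of_pos_right _ (by positivity)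
      refine lt_of_le_of_lt ?_ hlin
      calc _ ≤ 2 * t * (n + Fintype.card S.Ω) * (4 * 2 ^ Fintype.card (Fin 5) : ℝ) := by gcongr
        _ = _ := by ring

end

section
open Filter Topology

lemma ent_equiv {Ω A A' : Type} [Fintype Ω] [Fintype A] [DecidableEq A] [Fintype A']
    [DecidableEq A'] (p : Ω → ℝ) (F : Ω → A) (G : Ω → A') (e : A ≃ A') (h : ∀ ω, G ω = e (F ω)) :
    ent p F = ent p G := by
  unfold ent
  apply Fintype.sum_equiv e
  intro a
  have : prOf p G (e a) = prOf p F a := by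
    unfold prOf
    apply Finset.sum_congr rfl
    intro ω _
    rw [h]
    simp
  rw [this]

lemma jEnt_map {Ω γ : Type} [Fintype Ω] [Fintype γ] [DecidableEq γ] {k M : ℕ} (p : Ω → ℝ)
    (X : Fin M → Ω → γ) (e : Fin k ↪ Fin M) (A : Finset (Fin k)) :
    jEnt p (fun i => X (e i)) A = jEnt p X (A.map e) := by
  unfold jEnt
  symm
  have hb : Function.Bijective
      (fun i : {i // i ∈ A} => (⟨e i.1, Finset.mem_map_of_mem e i.2⟩ : {j // j ∈ A.map e})) := by
    constructor
    · intro i j hij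
      simp only [Subtype.mk.injEq] at hij
      exact Subtype.ext (e.injective hij)
    · rintro ⟨j, hj⟩
      obtain ⟨i, hi, rfl⟩ := Finset.mem_map.1 hj
      exact ⟨⟨i, hi⟩, rfl⟩
  exact ent_equiv p _ _ ((Equiv.arrowCongr (Equiv.ofBijective _ hb) (Equiv.refl γ)).symm)
    (fun ω => by funext i; rfl)

lemma rstar_transfer {Ω γ τ : Type} [Fintype Ω] [Fintype γ] [DecidableEq γ] [Fintype τ]
    [DecidableEq τ] {k M : ℕ} (p : Ω → ℝ) (S : Ω → τ) (X : Fin M → Ω → γ) (e : Fin k ↪ Fin M)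
    (R R' : Fin M → ℝ)
    (h : RstarMD p S (fun i => X (e i)) {(Finset.univ : Finset (Fin k))} (fun i => R (e i))
      (fun i => R' (e i))) :
    ∀ J ⊆ Finset.univ.map e, ∑ j ∈ J, (R' j - R j) ≤ (∑ j ∈ J, ent p (X j)) -
      (jEnt p X (Finset.univ.map e) - jEnt p X (Finset.univ.map e \ J)) := by
  intro J hJ
  obtain ⟨J', -, rfl⟩ := Finset.subset_map_iff.1 hJ
  have h1 := h.2.2 Finset.univ (Finset.mem_singleton_self _) J' (Finset.subset_univ _)
  rw [cjEnt, Finset.union_sdiff_of_subset (Finset.subset_univ _), jEnt_map, jEnt_map,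
    Finset.map_sdiff] at h1
  rw [Finset.sum_map, Finset.sum_map]
  exact h1

lemma bin_bound {n : ℕ} {γ ρ δ : ℝ} (hρ : 0 ≤ ρ) (hγ : 0 ≤ γ) (hδ : 0 ≤ δ) :
    ((cl2 (n * γ) / cl2 (n * (γ - ρ - δ)) + 1 : ℕ) : ℝ) ≤ (2:ℝ) ^ ((n:ℝ) * (ρ + δ) + 2) := by
  have h2 : (0:ℝ) < 2 := by norm_num
  have hn : (0:ℝ) ≤ n := Nat.cast_nonneg n
  have h1 : ((cl2 (n * γ) / cl2 (n * (γ - ρ - δ)) : ℕ) : ℝ) ≤ (2:ℝ) ^ ((n:ℝ) * (ρ + δ) + 1) := by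
    refine Nat.cast_div_le.trans ?_
    rw [div_le_iff₀ (by exact_mod_cast cl2_pos _)]
    calc (cl2 (n * γ) : ℝ) ≤ (2:ℝ) ^ ((n:ℝ) * γ + 1) := cl2_le (by positivity)
      _ = (2:ℝ) ^ ((n:ℝ) * (ρ + δ) + 1) * (2:ℝ) ^ ((n:ℝ) * (γ - ρ - δ)) := by
          rw [← Real.rpow_add h2]; congr 1; ring
      _ ≤ _ := by
          apply mul_le_mul_of_nonneg_left (le_cl2 _) (by positivity)
  have h3 : (1:ℝ) ≤ (2:ℝ) ^ ((n:ℝ) * (ρ + δ) + 1) := Real.one_le_rpow (by norm_num) (by positivity)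
  have h4 : (2:ℝ) ^ ((n:ℝ) * (ρ + δ) + 2) = (2:ℝ) ^ ((n:ℝ) * (ρ + δ) + 1) * 2 := by
    rw [← Real.rpow_add_one (by norm_num)]; congr 1; ring
  push_cast
  rw [h4]
  linarith

/-- number of bits used for the components in `E` at rates `ρ` -/
noncomputable def xbits (n : ℕ) (δ : ℝ) (ρ : Fin 5 → ℝ) (E : Finset (Fin 5)) : ℝ :=
  n * (3 * δ) + 1 + ∑ i ∈ E, (n * (ρ i + δ) + 2)

lemma xbits_nonneg (n : ℕ) {δ : ℝ} {ρ : Fin 5 → ℝ} (E : Finset (Fin 5)) (hδ : 0 ≤ δ)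
    (hρ : ∀ i, 0 ≤ ρ i) : 0 ≤ xbits n δ ρ E := by
  unfold xbits
  have : 0 ≤ ∑ i ∈ E, ((n:ℝ) * (ρ i + δ) + 2) := Finset.sum_nonneg fun i _ => by
    have := hρ i; positivity
  positivity

lemma xbits_bound (n : ℕ) {δ : ℝ} {ρ γ : Fin 5 → ℝ} (E : Finset (Fin 5)) (hδ : 0 ≤ δ)
    (hρ : ∀ i, 0 ≤ ρ i) (hγ : ∀ i, 0 ≤ γ i) :
    cl2 (n * (3 * δ)) * ∏ i ∈ E, (cl2 (n * γ i) / cl2 (n * (γ i - ρ i - δ)) + 1) ≤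
      2 ^ ⌈xbits n δ ρ E⌉₊ := by
  have h : ((cl2 (n * (3 * δ)) * ∏ i ∈ E, (cl2 (n * γ i) / cl2 (n * (γ i - ρ i - δ)) + 1) : ℕ) : ℝ)
      ≤ ((2 ^ ⌈xbits n δ ρ E⌉₊ : ℕ) : ℝ) := by
    rw [Nat.cast_mul, Nat.cast_prod]
    calc _ ≤ (2:ℝ) ^ ((n:ℝ) * (3 * δ) + 1) * (2:ℝ) ^ (∑ i ∈ E, ((n:ℝ) * (ρ i + δ) + 2)) := by
          apply mul_le_mul (cl2_le (by positivity)) _ (by positivity) (by positivity)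
          exact prod_le_rpow E _ _ (fun i _ => Nat.cast_nonneg _)
            fun i _ => bin_bound (hρ i) (hγ i) hδ
      _ = (2:ℝ) ^ (xbits n δ ρ E) := by
          rw [← Real.rpow_add (by norm_num)]; rfl
      _ ≤ (2:ℝ) ^ ((⌈xbits n δ ρ E⌉₊ : ℕ) : ℝ) := rpow_le2 (Nat.le_ceil _)
      _ = _ := by rw [Real.rpow_natCast]; push_cast; rfl
  exact_mod_cast h

lemma codes_exist {t : ℕ} (S : RVSetup t)
    (f11 f12 f21 f22 : S.γ × S.γ × S.γ → Msg t)
    (hf : ∀ ω, S.p ω ≠ 0 →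
        (S.V ω).1 = f11 (S.X 0 ω, S.X 1 ω, S.X 3 ω) ∧
        (S.V ω).1 = f22 (S.X 0 ω, S.X 2 ω, S.X 4 ω) ∧
        (S.V ω).2 = f12 (S.X 0 ω, S.X 1 ω, S.X 4 ω) ∧
        (S.V ω).2 = f21 (S.X 0 ω, S.X 2 ω, S.X 3 ω))
    (α β γr : Fin 5 → ℝ) (hR : RstarMD S.p S.V S.X recs5 β γr) (hα : ∀ i, 0 ≤ α i)
    (hαβ : ∀ n, (∀ J ⊆ sset n, ∑ j ∈ J, (γr j - α j) ≤ (∑ j ∈ J, ent S.p (S.X j)) -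
      (jEnt S.p S.X (sset n) - jEnt S.p S.X (sset n \ J))) ∨ (∀ i ∈ sset n, α i = β i))
    (δ : ℝ) (hδ : 0 < δ) :
    ∀ᶠ n : ℕ in atTop, ∀ L : ℕ, L ≤ t * n → ∃ C : Code L, IsZeroError C.base ∧
      C.base.stor 0 = ⌈xbits n δ α (sset 0)⌉₊ ∧ C.base.stor 1 = ⌈xbits n δ α (sset 1)⌉₊ ∧
      betaRate C.base 0 + betaRate C.base 1 =
        ((⌈xbits n δ β (aset 0 0)⌉₊ + ⌈xbits n δ β (aset 0 1)⌉₊ + ⌈xbits n δ β (aset 1 0)⌉₊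
          + ⌈xbits n δ β (aset 1 1)⌉₊ : ℕ) : ℝ) / 2 := by
  classical
  let cond : Fin 2 → Prop := fun n => ∀ J ⊆ sset n, ∑ j ∈ J, (γr j - α j) ≤
      (∑ j ∈ J, ent S.p (S.X j)) - (jEnt S.p S.X (sset n) - jEnt S.p S.X (sset n \ J))
  have hβ : ∀ i, 0 ≤ β i := fun i => (hR.1 i).1
  have hγ : ∀ i, 0 ≤ γr i := fun i => (hR.1 i).1.trans (hR.1 i).2
  have hp := params S (Δ := (Fin 2 × Fin 2) ⊕ Fin 2)
    (Sum.elim (fun q => aset 0 q.1 ∪ aset 1 q.2) (fun n => if cond n then sset n else ∅))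
    (Sum.elim (fun _ => β) (fun _ => α)) γr hR.2.1 (by
      rintro (⟨q1, q2⟩ | n) J hJ
      · simp only [Sum.elim_inl] at hJ ⊢
        have hmem : aset 0 q1 ∪ aset 1 q2 ∈ recs5 := by
          clear hJ; revert q1 q2; decide
        have := hR.2.2 _ hmem J hJ
        rwa [cjEnt, Finset.union_sdiff_of_subset hJ] at this
      · simp only [Sum.elim_inr] at hJ ⊢
        by_cases hc : cond n
        · rw [if_pos hc] at hJ ⊢
          exact hc J hJ
        · rw [if_neg hc] at hJ ⊢
          obtain rfl := Finset.subset_empty.1 hJ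
          simp) δ hδ
  filter_upwards [hp] with n hn L hL
  obtain ⟨kk, m, z, cb, htyp, hdec⟩ := hn
  have hemb : ∃ emb : Msg L → (IPos S.p n → Msg t), Function.Injective emb := by
    have : Nonempty (Msg L ↪ (IPos S.p n → Msg t)) := by
      apply Function.Embedding.nonempty_of_card_le
      rw [Fintype.card_fun, Fintype.card_fun, Fintype.card_fun, ZMod.card, Fintype.card_fin,
        Fintype.card_fin, ← pow_mul]
      exact Nat.pow_le_pow_right (by norm_num)
        (hL.trans (Nat.mul_le_mul_left _ (card_IPos_le S.p S.p_nonneg S.p_sum n).1))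
    exact ⟨this.some, this.some.injective⟩
  obtain ⟨emb, hemb⟩ := hemb
  exact code_of_enc (bseq S.p n) S.X S.V f11 f12 f21 f22
    (fun j => hf _ (fun h0 => by
      have h1 : kCount S.p n j.1 = 0 := by
        have : S.p j.1 = 0 := h0
        simp [kCount, this]
      have := j.2.2
      omega)) emb hemb (fun i => cl2 (n * γr i)) (cl2 (n * (3 * δ))) kk m z cb htyp
    (fun i => cl2 (n * (γr i - α i - δ))) (fun i => cl2 (n * (γr i - β i - δ)))
    (by
      intro n' w w' hk hb i hi
      rcases hαβ n' with hc | hc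
      · have := hdec (Sum.inr n') w w' hk
        simp only [Sum.elim_inr] at this
        rw [if_pos (show cond n' from hc)] at this
        rw [this hb i hi]
      · have := hb i hi
        simp only [hc i hi] at this
        exact this)
    (fun q1 q2 w w' hk hb => hdec (Sum.inl (q1, q2)) w w' hk hb)
    (fun n' => ⌈xbits n δ α (sset n')⌉₊) (fun n' q => ⌈xbits n δ β (aset n' q)⌉₊)
    (fun n' => xbits_bound n _ hδ.le hα hγ) (fun n' q => xbits_bound n _ hδ.le hβ hγ)

lemma rin_subset (t : ℕ) (ht : 1 ≤ t) (ab : ℝ × ℝ) (hab : RinMem t ab) : Achievable ab := by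
  obtain ⟨S, ⟨f11, f12, f21, f22, hf⟩, β, γr, hR, α, hα, h1, h1', h2, h2', hA, hB⟩ := hab
  intro ε hε
  have hβ : ∀ i, 0 ≤ β i := fun i => (hR.1 i).1
  have hα0 : ∀ i, 0 ≤ α i := fun i => (hα i).1
  have ht' : (1:ℝ) ≤ t := by exact_mod_cast ht
  let e3 : Fin 3 ↪ Fin 5 := ⟨![0, 1, 2], by decide⟩
  let e2 : Fin 2 ↪ Fin 5 := ⟨![3, 4], by decide⟩
  have hαβ : ∀ n, (∀ J ⊆ sset n, ∑ j ∈ J, (γr j - α j) ≤ (∑ j ∈ J, ent S.p (S.X j)) -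
      (jEnt S.p S.X (sset n) - jEnt S.p S.X (sset n \ J))) ∨ (∀ i ∈ sset n, α i = β i) := by
    intro n
    fin_cases n
    · by_cases hc : (γr 0 - β 0) + (γr 1 - β 1) + (γr 2 - β 2) <
            ent S.p (S.X 0) + ent S.p (S.X 1) + ent S.p (S.X 2) - jEnt S.p S.X {0,1,2}
      · left
        have h3 := h1 hc
        have hs : sset 0 = Finset.univ.map e3 := by decide
        have := rstar_transfer S.p S.V S.X e3 α γr (by
          convert h3 using 1 <;> (funext i; fin_cases i <;> rfl))
        rw [← hs] at this
        exact this
      · right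
        have h3 := h1' hc
        intro i hi
        simp only [sset, Fin.zero_eta, Matrix.cons_val_zero, Finset.mem_insert,
          Finset.mem_singleton] at hi
        rcases hi with rfl | rfl | rfl
        exacts [h3.1, h3.2.1, h3.2.2]
    · by_cases hc : (γr 3 - β 3) + (γr 4 - β 4) < mi S.p (S.X 3) (S.X 4)
      · left
        have h3 := h2 hc
        have hs : sset 1 = Finset.univ.map e2 := by decide
        have := rstar_transfer S.p S.V S.X e2 α γr (by
          convert h3 using 1 <;> (funext i; fin_cases i <;> rfl))
        rw [← hs] at this
        exact this
      · right
        have h3 := h2' hc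
        intro i hi
        simp only [sset, Fin.mk_one, Matrix.cons_val_one, Matrix.cons_val_fin_one,
          Finset.mem_insert, Finset.mem_singleton] at hi
        rcases hi with rfl | rfl
        exacts [h3.1, h3.2]
  have hδ : 0 < ε / 24 := by positivity
  obtain ⟨N, hN⟩ := eventually_atTop.1
    (codes_exist S f11 f12 f21 f22 hf α β γr hR hα0 hαβ (ε / 24) hδ)
  obtain ⟨L1, hL1⟩ := exists_nat_ge ((ε + 7 + t * ab.1 + t * ab.2) / (ε / 2))
  have ha0 : 0 ≤ ab.1 := by
    have : 0 ≤ 2 * t * ab.1 := by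
      linarith [hα0 0, hα0 1, hα0 2, hα0 3, hα0 4]
    by_contra hneg
    push Not at hneg
    nlinarith
  have hb0 : 0 ≤ ab.2 := by
    have : 0 ≤ 4 * t * ab.2 := by
      linarith [hβ 0, hβ 1, hβ 2, hβ 3, hβ 4]
    by_contra hneg
    push Not at hneg
    nlinarith
  refine ⟨max (t * N) L1, fun L hL => ?_⟩
  have hLN : N ≤ L / t + 1 := by
    have : N ≤ L / t := (Nat.le_div_iff_mul_le (by omega)).2 (by
      rw [mul_comm]; exact (le_max_left _ _).trans hL)
    omega
  have hLn : L ≤ t * (L / t + 1) := by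
    have := Nat.div_add_mod L t
    have := Nat.mod_lt L (show t > 0 by omega)
    rw [mul_add]; omega
  have hLn2 : t * (L / t + 1) ≤ L + t := by
    have := Nat.mul_div_le L t
    rw [mul_add]; omega
  have hnL : L / t + 1 ≤ L + 1 := by
    have := Nat.div_le_self L t
    omega
  obtain ⟨C, hC, hs0, hs1, hb⟩ := hN _ hLN L hLn
  generalize L / t + 1 = n at *
  have hLr : (ε + 7 + t * ab.1 + t * ab.2) ≤ L * (ε / 2) := by
    rw [div_le_iff₀ (by positivity)] at hL1
    have : (L1 : ℝ) ≤ L := by exact_mod_cast (le_max_right _ _).trans hL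
    nlinarith
  have hn1 : (t:ℝ) * n ≤ L + t := by exact_mod_cast hLn2
  have hn2 : (n:ℝ) ≤ L + 1 := by exact_mod_cast hnL
  have hta : (0:ℝ) ≤ t * ab.1 := by positivity
  have htb : (0:ℝ) ≤ t * ab.2 := by positivity
  have hn0 : (0:ℝ) ≤ n := Nat.cast_nonneg n
  have c1 := fun E => (Nat.ceil_lt_add_one (xbits_nonneg n E hδ.le hα0)).le
  have c2 := fun E => (Nat.ceil_lt_add_one (xbits_nonneg n E hδ.le hβ)).le
  refine ⟨C, hC, ?_, ?_⟩
  · rw [hs0, hs1]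
    push_cast
    have d0 := c1 (sset 0)
    have d1 := c1 (sset 1)
    have e0 : xbits n (ε / 24) α (sset 0) + xbits n (ε / 24) α (sset 1) =
        n * (α 0 + α 1 + α 2 + α 3 + α 4) + n * (11 * (ε / 24)) + 12 := by
      simp [xbits, sset]; ring
    have e1 := mul_le_mul_of_nonneg_left hA hn0
    have e2 := mul_le_mul_of_nonneg_right hn1 ha0
    have e3 := mul_le_mul_of_nonneg_right hn2 hε.le
    nlinarith
  · rw [hb]
    push_cast
    have d0 := c2 (aset 0 0)
    have d1 := c2 (aset 0 1)
    have d2 := c2 (aset 1 0)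
    have d3 := c2 (aset 1 1)
    have e0 : xbits n (ε / 24) β (aset 0 0) + xbits n (ε / 24) β (aset 0 1) +
        xbits n (ε / 24) β (aset 1 0) + xbits n (ε / 24) β (aset 1 1) =
        n * (2 * β 0 + β 1 + β 2 + β 3 + β 4) + n * (18 * (ε / 24)) + 16 := by
      simp [xbits, aset]; ring
    have e1 := mul_le_mul_of_nonneg_left hB hn0
    have e2 := mul_le_mul_of_nonneg_right hn1 hb0
    have e3 := mul_le_mul_of_nonneg_right hn2 hε.le
    nlinarith

end

/-- For every integer `t ≥ 1`, the region `R^{(t)}_in` is contained in the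
achievable storage-retrieval rate region `R` of the (2,2) PIR problem. -/
theorem statement2 (t : ℕ) (ht : 1 ≤ t) : {ab : ℝ × ℝ | RinMem t ab} ⊆ Region := by
  intro ab hab
  exact rin_subset t ht ab hab

end PIR
end
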